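/- arXiv:1902.00768 — 6 statements merged into one kernel-verified Lean document; each statement's English description precedes it below -/
import Mathlib

section
/- There exists a universal constant C > 0 such that for all integers T, p, n ≥ 1, Talagrand's γ₂ functional of the unit sphere S^{Tp−1} ⊂ ℝ^{Tp} with respect to the metric d_⊖(x, y) := ‖Toep_{T,n}(x − y)‖_op satisfies γ₂(S^{Tp−1}, d_⊖) ≤ C·√( T·p·min{T, log²(eTp)·log²(eT)} ). -/
open scoped ENNReal

/-- ℓ₂→ℓ₂ operator norm of a real matrix. -/
noncomputable def opNorm {α β : Type*} [Fintype α] [Fintype β] [DecidableEq β]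
    (A : Matrix α β ℝ) : ℝ :=
  ‖LinearMap.toContinuousLinearMap (Matrix.toEuclideanLin A)‖

/-- The banded block-Toeplitz matrix `Toep_{T,n}(v̄)` whose `(i,j)`-th `1×p` block is
`v_{T−(j−i)}ᵀ` when `0 ≤ j−i ≤ T−1` and zero otherwise. -/
noncomputable def Toep (T p n : ℕ) (v : Fin T → Fin p → ℝ) :
    Matrix (Fin n) (Fin (n + T - 1) × Fin p) ℝ :=
  Matrix.of fun i jk =>
    if h : (i : ℕ) ≤ (jk.1 : ℕ) ∧ (jk.1 : ℕ) - (i : ℕ) < T ∧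
        T - 1 - ((jk.1 : ℕ) - (i : ℕ)) < T
    then v ⟨T - 1 - ((jk.1 : ℕ) - (i : ℕ)), h.2.2⟩ jk.2
    else 0

/-- An admissible sequence of partitions for Talagrand's `γ₂` functional. -/
def IsAdmissible {X : Type*} (A : ℕ → X → Set X) : Prop :=
  (∀ n x, x ∈ A n x) ∧
  (∀ n x y, y ∈ A n x → A n y = A n x) ∧
  (Set.range (A 0)).Subsingleton ∧
  (∀ n, (Set.range (A n)).Finite ∧ Nat.card (Set.range (A n)) ≤ 2 ^ 2 ^ n)

/-- Diameter of a set with respect to a distance function `d`. -/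
noncomputable def diamD {X : Type*} (d : X → X → ℝ) (s : Set X) : ℝ≥0∞ :=
  ⨆ x ∈ s, ⨆ y ∈ s, ENNReal.ofReal (d x y)

/-- Talagrand's `γ₂` functional of `(X, d)`. -/
noncomputable def gamma2 {X : Type*} (d : X → X → ℝ) : ℝ≥0∞ :=
  ⨅ (A : ℕ → X → Set X) (_ : IsAdmissible A),
    ⨆ x : X, ∑' n : ℕ, (2 : ℝ≥0∞) ^ ((n : ℝ) / 2) * diamD d (A n x)

/-!
The operator norm of `Toep T p n v` is at most `√2` times the sup norm of its symbol sampled at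
the `2 * T`-th roots of unity: cut the rows into blocks of length `T`; each block is part of a
cyclic correlation of period `2 * T`, which the discrete Fourier transform diagonalizes. By
Parseval the `2 * T` sampled values, vectors in `ℂ^p`, have squares summing to `2 * T * ‖v‖ ^ 2`.
It thus suffices to chain, in the sup norm, over the families of `2 * T` vectors with `ℓ²` norm at
most `R = √(2 * T)`. At most `2 ^ j` of these vectors are longer than `R / √(2 ^ j)`, so a
partition of radius `R / √(2 ^ j)` needs only about `2 ^ j * p * log T` bits: their positions, and
points of a net of `ℂ^p` near them. Each of the roughly `log T` scales with `2 ^ j ≤ 2 * T` hence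
contributes `R * √(p * log T)` to `γ₂`, and the finer scales contribute no more than one of these.
-/

open Finset MeasureTheory Metric Module
open scoped NNReal InnerProductSpace ZMod

section Fourier

lemma sum_zmod_val_eq_sum_range {A : Type*} [AddCommMonoid A] (N : ℕ) [NeZero N] (f : ℕ → A) :
    ∑ a : ZMod N, f a.val = ∑ s ∈ range N, f s := by
  cases N with
  | zero => exact absurd rfl (NeZero.ne 0)
  | succ n => exact Fin.sum_univ_eq_sum_range f (n + 1)

variable {N : ℕ} [NeZero N] {E : Type*} [NormedAddCommGroup E] [InnerProductSpace ℂ E]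

lemma inner_stdAddChar_smul_left (a : ZMod N) (x y : E) :
    ⟪(ZMod.stdAddChar a : ℂ) • x, y⟫_ℂ = ZMod.stdAddChar (-a) * ⟪x, y⟫_ℂ := by
  rw [inner_smul_left, AddChar.map_neg_eq_conj]

lemma sum_inner_dft_left (Φ Ψ : ZMod N → E) :
    ∑ k, ⟪𝓕 Φ k, Ψ k⟫_ℂ = ∑ j, ⟪Φ j, 𝓕 Ψ (-j)⟫_ℂ := by
  simp only [ZMod.dft_apply, sum_inner, inner_sum, inner_stdAddChar_smul_left, inner_smul_right]
  rw [sum_comm]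
  refine sum_congr rfl fun j _ => sum_congr rfl fun k _ => ?_
  rw [mul_neg, mul_comm k j]

lemma sum_norm_sq_dft (Φ : ZMod N → E) : ∑ k, ‖𝓕 Φ k‖ ^ 2 = N * ∑ j, ‖Φ j‖ ^ 2 := by
  have h := sum_inner_dft_left Φ (𝓕 Φ)
  simp only [ZMod.dft_dft, neg_neg, inner_smul_right, inner_self_eq_norm_sq_to_K, ← mul_sum,
    Complex.coe_algebraMap] at h
  exact_mod_cast h

/-- The cyclic cross-correlation of two vector-valued sequences; unlike the convolution, it is
sesquilinear, so that no conjugate appears in `dft_crossCorrelation`. -/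
noncomputable def crossCorrelation (w u : ZMod N → E) (i : ZMod N) : ℂ :=
  ∑ a, ⟪w a, u (i + a)⟫_ℂ

lemma dft_crossCorrelation (w u : ZMod N → E) (k : ZMod N) :
    𝓕 (crossCorrelation w u) k = ⟪𝓕 w k, 𝓕 u k⟫_ℂ := by
  simp only [ZMod.dft_apply, crossCorrelation, smul_eq_mul, mul_sum, sum_inner, inner_sum,
    inner_stdAddChar_smul_left, inner_smul_right]
  rw [sum_comm]
  conv_rhs => rw [sum_comm]
  refine sum_congr rfl fun a _ => ?_
  rw [← Equiv.sum_comp (Equiv.addRight a) fun t => ZMod.stdAddChar _ * (_ * ⟪w a, u t⟫_ℂ)]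
  refine sum_congr rfl fun i _ => ?_
  rw [Equiv.coe_addRight, ← mul_assoc, ← AddChar.map_add_eq_mul]
  congr 3
  ring

lemma sum_norm_sq_crossCorrelation_le (w u : ZMod N → E) :
    ∑ i, ‖crossCorrelation w u i‖ ^ 2 ≤ ‖𝓕 w‖ ^ 2 * ∑ t, ‖u t‖ ^ 2 := by
  have hN : (0 : ℝ) < N := Nat.cast_pos.2 (NeZero.pos N)
  refine le_of_mul_le_mul_left ?_ hN
  calc N * ∑ i, ‖crossCorrelation w u i‖ ^ 2
      = ∑ k, ‖⟪𝓕 w k, 𝓕 u k⟫_ℂ‖ ^ 2 := by simp only [← sum_norm_sq_dft, dft_crossCorrelation]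
    _ ≤ ∑ k, (‖𝓕 w‖ * ‖𝓕 u k‖) ^ 2 := by
        gcongr with k
        exact (norm_inner_le_norm _ _).trans (by gcongr; exact norm_le_pi_norm _ k)
    _ = N * (‖𝓕 w‖ ^ 2 * ∑ t, ‖u t‖ ^ 2) := by
        simp only [mul_pow, ← mul_sum, sum_norm_sq_dft]
        ring

end Fourier

section ZeroExtend

variable {E : Type*} [Zero E] {m : ℕ}

/-- Extension of a finite sequence by zero to all of `ℕ`. -/
noncomputable def zeroExtend (x : Fin m → E) (j : ℕ) : E :=
  if h : j < m then x ⟨j, h⟩ else 0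

@[simp]
lemma zeroExtend_val (x : Fin m → E) (i : Fin m) : zeroExtend x i = x i := by
  simp [zeroExtend]

lemma zeroExtend_of_le (x : Fin m → E) {j : ℕ} (h : m ≤ j) : zeroExtend x j = 0 :=
  dif_neg h.not_gt

lemma zeroExtend_sub {E : Type*} [AddGroup E] (x y : Fin m → E) (j : ℕ) :
    zeroExtend (x - y) j = zeroExtend x j - zeroExtend y j := by
  unfold zeroExtend
  split_ifs <;> simp

lemma sum_range_zeroExtend {A : Type*} [AddCommMonoid A] (x : Fin m → E) {K : ℕ} (hK : m ≤ K)
    (f : ℕ → E → A) (hf : ∀ j, f j 0 = 0) :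
    ∑ j ∈ range K, f j (zeroExtend x j) = ∑ i : Fin m, f i (x i) := by
  obtain ⟨k, rfl⟩ := Nat.exists_eq_add_of_le hK
  have htail : ∑ j ∈ range k, f (m + j) (zeroExtend x (m + j)) = 0 :=
    sum_eq_zero fun j _ => by rw [zeroExtend_of_le x (Nat.le_add_right m j), hf]
  rw [sum_range_add, htail, add_zero, ← Fin.sum_univ_eq_sum_range fun j => f j (zeroExtend x j)]
  simp only [zeroExtend_val]

end ZeroExtend

section SlidingWindow

variable {T : ℕ} {E : Type*} [NormedAddCommGroup E] [InnerProductSpace ℂ E]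

/-- The correlation of the window `w` with the sequence `U`, starting at position `i`. -/
noncomputable def windowInner (w : Fin T → E) (U : ℕ → E) (i : ℕ) : ℂ :=
  ∑ s, ⟪w s, U (i + s)⟫_ℂ

/-- The Fourier transform of the window `w`, padded by zeros to the period `2 * T`, which is long
enough for `T` consecutive shifts of `w` not to wrap around. -/
noncomputable def windowDFT [NeZero T] (w : Fin T → E) : ZMod (2 * T) → E :=
  𝓕 fun a => zeroExtend w a.val

variable [NeZero T]

lemma windowDFT_sub (w w' : Fin T → E) : windowDFT (w - w') = windowDFT w - windowDFT w' := by
  simp only [windowDFT, zeroExtend_sub, ← map_sub]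
  rfl

lemma sum_norm_sq_windowDFT (w : Fin T → E) :
    ∑ k, ‖windowDFT w k‖ ^ 2 = 2 * T * ∑ s, ‖w s‖ ^ 2 := by
  rw [windowDFT, sum_norm_sq_dft, sum_zmod_val_eq_sum_range (2 * T) fun s => ‖zeroExtend w s‖ ^ 2,
    sum_range_zeroExtend w (by lia) (fun _ e => ‖e‖ ^ 2) (by simp)]
  push_cast
  rfl

lemma crossCorrelation_zeroExtend_val (w : Fin T → E) (U : ℕ → E) {i : ℕ} (hi : i < T) :
    crossCorrelation (fun a : ZMod (2 * T) => zeroExtend w a.val) (fun t => U t.val) i =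
      windowInner w U i := by
  have no_wrap (a : ZMod (2 * T)) : ⟪zeroExtend w a.val, U (i + a).val⟫_ℂ =
      ⟪zeroExtend w a.val, U (i + a.val)⟫_ℂ := by
    by_cases ha : a.val < T
    · have hi_val : (i : ZMod (2 * T)).val = i := ZMod.val_cast_of_lt (by lia)
      rw [ZMod.val_add_of_lt (by lia), hi_val]
    · simp only [zeroExtend_of_le w (not_lt.1 ha), inner_zero_left]
  simp only [crossCorrelation, no_wrap]
  rw [sum_zmod_val_eq_sum_range (2 * T) fun s => ⟪zeroExtend w s, U (i + s)⟫_ℂ]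
  exact sum_range_zeroExtend w (by lia) (fun s e => ⟪e, U (i + s)⟫_ℂ) (by simp)

lemma sum_range_norm_sq_windowInner_le (w : Fin T → E) (U : ℕ → E) :
    ∑ i ∈ range T, ‖windowInner w U i‖ ^ 2 ≤
      ‖windowDFT w‖ ^ 2 * ∑ t ∈ range (2 * T), ‖U t‖ ^ 2 := by
  set c := crossCorrelation (fun a : ZMod (2 * T) => zeroExtend w a.val) (fun t => U t.val)
  calc ∑ i ∈ range T, ‖windowInner w U i‖ ^ 2
      = ∑ i ∈ range T, ‖c (i : ZMod (2 * T))‖ ^ 2 :=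
        sum_congr rfl fun i hi => by
          rw [← crossCorrelation_zeroExtend_val w U (mem_range.1 hi)]
    _ ≤ ∑ i ∈ range (2 * T), ‖c (i : ZMod (2 * T))‖ ^ 2 :=
        sum_le_sum_of_subset_of_nonneg (range_subset_range.2 (by lia)) fun _ _ _ => by positivity
    _ = ∑ i, ‖c i‖ ^ 2 := by
        simp only [← sum_zmod_val_eq_sum_range (2 * T) fun i => ‖c (i : ZMod (2 * T))‖ ^ 2,
          ZMod.natCast_zmod_val]
    _ ≤ ‖windowDFT w‖ ^ 2 * ∑ t : ZMod (2 * T), ‖U t.val‖ ^ 2 :=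
        sum_norm_sq_crossCorrelation_le _ _
    _ = _ := by rw [sum_zmod_val_eq_sum_range (2 * T) fun t => ‖U t‖ ^ 2]

lemma sum_range_mul_eq_sum_blocks {A : Type*} [AddCommMonoid A] (m T : ℕ) (f : ℕ → A) :
    ∑ j ∈ range (m * T), f j = ∑ r ∈ range m, ∑ t ∈ range T, f (r * T + t) := by
  induction m with
  | zero => simp
  | succ m ih => rw [sum_range_succ, ← ih, Nat.succ_mul, sum_range_add]

-- The factor `2` arises because every block of `U` meets two consecutive blocks of shifts.
lemma sum_range_mul_norm_sq_windowInner_le (w : Fin T → E) (U : ℕ → E) (m : ℕ) :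
    ∑ i ∈ range (m * T), ‖windowInner w U i‖ ^ 2 ≤
      2 * ‖windowDFT w‖ ^ 2 * ∑ t ∈ range ((m + 1) * T), ‖U t‖ ^ 2 := by
  set energy : ℕ → ℝ := fun r => ∑ t ∈ range T, ‖U (r * T + t)‖ ^ 2
  have energy_nonneg (r : ℕ) : 0 ≤ energy r := by positivity
  have block_le (r : ℕ) : ∑ t ∈ range T, ‖windowInner w U (r * T + t)‖ ^ 2 ≤
      ‖windowDFT w‖ ^ 2 * (energy r + energy (r + 1)) := by
    have h := sum_range_norm_sq_windowInner_le w fun t => U (r * T + t)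
    simpa only [windowInner, two_mul T, sum_range_add, ← add_assoc, energy, Nat.succ_mul] using h
  calc ∑ i ∈ range (m * T), ‖windowInner w U i‖ ^ 2
      ≤ ∑ r ∈ range m, ‖windowDFT w‖ ^ 2 * (energy r + energy (r + 1)) := by
        rw [sum_range_mul_eq_sum_blocks]
        exact sum_le_sum fun r _ => block_le r
    _ = ‖windowDFT w‖ ^ 2 * (∑ r ∈ range m, energy r + ∑ r ∈ range m, energy (r + 1)) := by
        rw [← mul_sum, sum_add_distrib]
    _ ≤ ‖windowDFT w‖ ^ 2 * (∑ r ∈ range (m + 1), energy r + ∑ r ∈ range (m + 1), energy r) := by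
        gcongr ?_ * (?_ + ?_)
        · exact sum_le_sum_of_subset_of_nonneg (range_subset_range.2 m.le_succ)
            fun r _ _ => energy_nonneg r
        · rw [sum_range_succ' energy]
          exact le_add_of_nonneg_right (energy_nonneg 0)
    _ = _ := by
        rw [sum_range_mul_eq_sum_blocks]
        ring

end SlidingWindow

section Toeplitz

/-- Coordinatewise inclusion of `ℝ^ι` into `ℂ^ι` with its Euclidean norm. -/
noncomputable def complexify {ι : Type*} : (ι → ℝ) →ₗ[ℝ] EuclideanSpace ℂ ι where
  toFun x := WithLp.toLp 2 fun c => (x c : ℂ)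
  map_add' x y := by ext c; simp
  map_smul' r x := by ext c; simp

lemma inner_complexify {ι : Type*} [Fintype ι] (x y : ι → ℝ) :
    ⟪complexify x, complexify y⟫_ℂ = (x ⬝ᵥ y : ℝ) := by
  simp [complexify, PiLp.inner_apply, dotProduct, mul_comm]

lemma norm_sq_complexify {ι : Type*} [Fintype ι] (x : ι → ℝ) :
    ‖complexify x‖ ^ 2 = ∑ c, x c ^ 2 := by
  simp [complexify, EuclideanSpace.norm_sq_eq]

variable {T p n : ℕ}

lemma add_lt_add_sub_one (i : Fin n) (s : Fin T) : (i + s : ℕ) < n + T - 1 := by lia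

lemma Toep_apply_add (v : Fin T → Fin p → ℝ) (i : Fin n) (s : Fin T) (c : Fin p) :
    Toep T p n v i (⟨i + s, add_lt_add_sub_one i s⟩, c) = v s.rev c := by
  have hrev : T - 1 - (s : ℕ) = T - (s + 1) := by lia
  simp [Toep, Fin.rev, hrev]
  lia

lemma Toep_apply_eq_zero (v : Fin T → Fin p → ℝ) {i : Fin n} {j : Fin (n + T - 1)}
    (h : ∀ s : Fin T, (i + s : ℕ) ≠ j) (c : Fin p) : Toep T p n v i (j, c) = 0 := by
  refine dif_neg fun ⟨hij, hT, _⟩ => h ⟨j - i, hT⟩ ?_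
  exact Nat.add_sub_cancel' hij

lemma toEuclideanLin_Toep_apply (v : Fin T → Fin p → ℝ)
    (u : EuclideanSpace ℝ (Fin (n + T - 1) × Fin p)) (i : Fin n) :
    ((Matrix.toEuclideanLin (Toep T p n v) u i : ℝ) : ℂ) =
      windowInner (fun s => complexify (v s.rev))
        (zeroExtend fun j => complexify fun c => u (j, c)) i := by
  let shift (s : Fin T) : Fin (n + T - 1) := ⟨i + s, add_lt_add_sub_one i s⟩
  have shift_injective : Function.Injective shift := fun s t h => by
    simpa [shift, Fin.ext_iff] using h
  have h_shift : ∑ s, v s.rev ⬝ᵥ (fun c => u (shift s, c)) =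
      ∑ j, (fun c => Toep T p n v i (j, c)) ⬝ᵥ fun c => u (j, c) := by
    refine Fintype.sum_of_injective shift shift_injective _ _ (fun j hj => ?_) fun s => ?_
    · have h_zero (c : Fin p) : Toep T p n v i (j, c) = 0 :=
        Toep_apply_eq_zero v (fun s hs => hj ⟨s, Fin.ext hs⟩) c
      simp only [dotProduct, h_zero, zero_mul, sum_const_zero]
    · simp only [shift, Toep_apply_add]
  have h_window (s : Fin T) : zeroExtend (fun j => complexify fun c => u (j, c)) (i + s) =
      complexify fun c => u (shift s, c) :=
    zeroExtend_val _ (shift s)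
  have h_row : Matrix.toEuclideanLin (Toep T p n v) u i =
      ∑ j, (fun c => Toep T p n v i (j, c)) ⬝ᵥ fun c => u (j, c) :=
    Fintype.sum_prod_type _
  simp only [windowInner, h_window, inner_complexify, h_row, ← h_shift, Complex.ofReal_sum]

variable [NeZero T]

/-- The symbol of the Toeplitz matrix `Toep T p n v`, that is, the trigonometric polynomial with
coefficients `v`, sampled at the `2 * T`-th roots of unity. -/
noncomputable def toepSymbol (v : Fin T → Fin p → ℝ) : ZMod (2 * T) → EuclideanSpace ℂ (Fin p) :=
  windowDFT fun s => complexify (v s.rev)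

lemma toepSymbol_sub (v v' : Fin T → Fin p → ℝ) :
    toepSymbol (v - v') = toepSymbol v - toepSymbol v' := by
  simp only [toepSymbol, ← windowDFT_sub, Pi.sub_apply, map_sub]
  rfl

lemma sum_norm_sq_toepSymbol (v : Fin T → Fin p → ℝ) :
    ∑ k, ‖toepSymbol v k‖ ^ 2 = 2 * T * ∑ i, ∑ c, v i c ^ 2 := by
  rw [toepSymbol, sum_norm_sq_windowDFT, ← Equiv.sum_comp Fin.revPerm]
  simp only [norm_sq_complexify, Fin.revPerm_apply, Fin.rev_rev]

lemma norm_sq_toEuclideanLin_Toep_le (v : Fin T → Fin p → ℝ)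
    (u : EuclideanSpace ℝ (Fin (n + T - 1) × Fin p)) :
    ‖Matrix.toEuclideanLin (Toep T p n v) u‖ ^ 2 ≤ 2 * ‖toepSymbol v‖ ^ 2 * ‖u‖ ^ 2 := by
  set U : ℕ → EuclideanSpace ℂ (Fin p) := zeroExtend fun j => complexify fun c => u (j, c)
  have hT : 1 ≤ T := NeZero.one_le
  calc ‖Matrix.toEuclideanLin (Toep T p n v) u‖ ^ 2
      = ∑ i ∈ range n, ‖windowInner (fun s => complexify (v s.rev)) U i‖ ^ 2 := by
        simp only [EuclideanSpace.norm_sq_eq, ← Fin.sum_univ_eq_sum_range fun i =>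
          ‖windowInner (fun s => complexify (v s.rev)) U i‖ ^ 2, U, ← toEuclideanLin_Toep_apply,
          Complex.norm_real]
    _ ≤ ∑ i ∈ range (n * T), ‖windowInner (fun s => complexify (v s.rev)) U i‖ ^ 2 :=
        sum_le_sum_of_subset_of_nonneg (range_subset_range.2 (Nat.le_mul_of_pos_right n hT))
          fun _ _ _ => by positivity
    _ ≤ 2 * ‖toepSymbol v‖ ^ 2 * ∑ t ∈ range ((n + 1) * T), ‖U t‖ ^ 2 :=
        sum_range_mul_norm_sq_windowInner_le _ U n
    _ = 2 * ‖toepSymbol v‖ ^ 2 * ‖u‖ ^ 2 := by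
        rw [sum_range_zeroExtend _ (by nlinarith [Nat.sub_le (n + T) 1])
          (fun _ e => ‖e‖ ^ 2) (by simp)]
        simp only [norm_sq_complexify, EuclideanSpace.norm_sq_eq u, Real.norm_eq_abs, sq_abs,
          Fintype.sum_prod_type]

lemma opNorm_Toep_le (v : Fin T → Fin p → ℝ) :
    opNorm (Toep T p n v) ≤ √2 * ‖toepSymbol v‖ := by
  refine ContinuousLinearMap.opNorm_le_bound _ (by positivity) fun u => ?_
  refine (sq_le_sq₀ (norm_nonneg _) (by positivity)).1 ?_
  rw [mul_pow, mul_pow, Real.sq_sqrt zero_le_two]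
  exact norm_sq_toEuclideanLin_Toep_le v u

end Toeplitz

section MetricEntropy

variable {E : Type*} [NormedAddCommGroup E] [NormedSpace ℝ E] [FiniteDimensional ℝ E]

-- The balls of radius `ε / 2` around the points of `s` are disjoint; compare volumes.
lemma card_le_of_isSeparated {ε : ℝ≥0} (hε : 0 < ε) {R : ℝ} (hR : 0 ≤ R) {c : E} {s : Finset E}
    (hsub : (s : Set E) ⊆ closedBall c R) (hsep : IsSeparated ε (s : Set E)) :
    (#s : ℝ) ≤ (1 + 2 * R / ε) ^ finrank ℝ E := by
  borelize E
  let μ : Measure E := Measure.addHaar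
  have volume_closedBall (a : E) {r : ℝ} (hr : 0 ≤ r) :
      μ.real (closedBall a r) = r ^ finrank ℝ E * μ.real (ball 0 1) :=
    μ.addHaar_real_closedBall a hr
  have unit_pos : 0 < μ.real (ball 0 1) :=
    ENNReal.toReal_pos (measure_ball_pos μ _ one_pos).ne' measure_ball_lt_top.ne
  have hdisj : (s : Set E).PairwiseDisjoint fun a => closedBall a (ε / 2) :=
    fun a ha b hb hab => closedBall_disjoint_closedBall <| by
      simpa only [add_halves, edist_nndist, ENNReal.coe_lt_coe, ← NNReal.coe_lt_coe, coe_nndist]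
        using hsep ha hb hab
  have hunion : ⋃ a ∈ s, closedBall a (ε / 2 : ℝ) ⊆ closedBall c (R + ε / 2) :=
    Set.iUnion₂_subset fun a ha => closedBall_subset_closedBall' <| by
      linarith [mem_closedBall.1 (hsub ha)]
  have hvol := measureReal_mono (μ := μ) hunion measure_closedBall_lt_top.ne
  rw [measureReal_biUnion_finset hdisj (fun a _ => isClosed_closedBall.measurableSet)
    fun a _ => measure_closedBall_lt_top.ne] at hvol
  simp only [volume_closedBall _ (show (0 : ℝ) ≤ ε / 2 by positivity),
    volume_closedBall _ (show 0 ≤ R + ε / 2 by positivity), sum_const, nsmul_eq_mul,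
    ← mul_assoc] at hvol
  calc (#s : ℝ) ≤ (R + ε / 2) ^ finrank ℝ E / (ε / 2) ^ finrank ℝ E :=
        (le_div_iff₀ (by positivity)).2 (le_of_mul_le_mul_right hvol unit_pos)
    _ = (1 + 2 * R / ε) ^ finrank ℝ E := by
        rw [← div_pow]
        congr 1
        field_simp
        ring

lemma packingNumber_closedBall_le {ε : ℝ≥0} (hε : 0 < ε) {R : ℝ} (hR : 0 ≤ R) (c : E) :
    packingNumber ε (closedBall c R) ≤ ⌊(1 + 2 * R / ε) ^ finrank ℝ E⌋₊ := by
  refine iSup_le fun C => iSup₂_le fun hsub hsep => ?_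
  by_contra! hlarge
  obtain ⟨t, htC, ht⟩ := Set.exists_subset_encard_eq (Order.add_one_le_of_lt hlarge)
  have ht_fin : t.Finite := Set.finite_of_encard_eq_coe (k := _ + 1) (by exact_mod_cast ht)
  lift t to Finset E using ht_fin
  rw [Set.encard_coe_eq_coe_finsetCard] at ht
  have hcard := Nat.le_floor (card_le_of_isSeparated hε hR (htC.trans hsub) (hsep.subset htC))
  have : #t = ⌊(1 + 2 * R / ε) ^ finrank ℝ E⌋₊ + 1 := by exact_mod_cast ht
  lia

lemma exists_finset_cover_closedBall {ε R : ℝ} (hε : 0 < ε) (hR : 0 ≤ R) (c : E) :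
    ∃ s : Finset E, (#s : ℝ) ≤ (1 + 2 * R / ε) ^ finrank ℝ E ∧
      closedBall c R ⊆ ⋃ a ∈ s, closedBall a ε := by
  lift ε to ℝ≥0 using hε.le
  have hle := (coveringNumber_le_packingNumber ε _).trans (packingNumber_closedBall_le hε hR c)
  obtain ⟨s, -, hs_fin, hcover, hs_card⟩ :=
    exists_set_encard_eq_coveringNumber (ne_top_of_le_ne_top (ENat.natCast_ne_top _) hle)
  lift s to Finset E using hs_fin
  refine ⟨s, ?_, isCover_iff_subset_iUnion_closedBall.1 hcover⟩
  rw [← hs_card, Set.encard_coe_eq_coe_finsetCard, Nat.cast_le] at hle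
  exact (Nat.le_floor_iff (by positivity)).1 hle

end MetricEntropy

section Partition

variable {X : Type*} {d d' : X → X → ℝ} {N N' : ℕ} {δ : ℝ}

/-- `X` splits into at most `N` cells of `d`-diameter at most `δ`. The partition is encoded by the
map sending a point to the label of its cell. -/
def HasPartition (d : X → X → ℝ) (N : ℕ) (δ : ℝ) : Prop :=
  ∃ cell : X → Fin N, ∀ x y, cell x = cell y → d x y ≤ δ

namespace HasPartition

lemma of_fintype {ι : Type*} [Fintype ι] (cell : X → ι) (hN : Fintype.card ι ≤ N)
    (h : ∀ x y, cell x = cell y → d x y ≤ δ) : HasPartition d N δ := by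
  obtain ⟨label⟩ : Nonempty (ι ↪ Fin N) := Function.Embedding.nonempty_of_card_le (by simpa)
  exact ⟨label ∘ cell, fun x y hxy => h x y (label.injective hxy)⟩

lemma mono (h : HasPartition d N δ) (hN : N ≤ N') : HasPartition d N' δ :=
  let ⟨cell, hcell⟩ := h
  of_fintype cell (by simpa) hcell

lemma of_forall_le (h : ∀ x y, d x y ≤ δ) : HasPartition d 1 δ :=
  of_fintype (fun _ => ()) le_rfl fun x y _ => h x y

end HasPartition

lemma gamma2_mono (h : ∀ x y, d x y ≤ d' x y) : gamma2 d ≤ gamma2 d' := by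
  unfold gamma2 diamD
  gcongr with A _ x n y _ z _
  exact h y z

lemma isAdmissible_fibers {N : ℕ → ℕ} (cell : ∀ k, X → Fin (N k)) (hN₀ : N 0 = 1)
    (hN : ∀ k, N k ≤ 2 ^ 2 ^ k) : IsAdmissible fun k x => {y | cell k y = cell k x} := by
  have range_subset (k : ℕ) : Set.range (fun x => {y | cell k y = cell k x}) ⊆
      Set.range fun a : Fin (N k) => {y | cell k y = a} :=
    Set.range_subset_iff.2 fun x => ⟨cell k x, rfl⟩
  have : Subsingleton (Fin (N 0)) := hN₀ ▸ inferInstance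
  refine ⟨fun _ _ => rfl, fun k x y hy => ?_, ?_, fun k => ⟨?_, ?_⟩⟩
  · have hyx : cell k y = cell k x := hy
    simp only [hyx]
  · exact (Set.subsingleton_range _).anti (range_subset 0)
  · exact (Set.finite_range _).subset (range_subset k)
  · calc Nat.card (Set.range fun x => {y | cell k y = cell k x})
        ≤ Nat.card (Set.range fun a : Fin (N k) => {y | cell k y = a}) :=
          Nat.card_mono (Set.finite_range _) (range_subset k)
      _ ≤ Nat.card (Fin (N k)) := Finite.card_range_le _
      _ ≤ 2 ^ 2 ^ k := by simpa using hN k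

lemma gamma2_le_tsum {N : ℕ → ℕ} {δ : ℕ → ℝ} (hN₀ : N 0 = 1) (hN : ∀ k, N k ≤ 2 ^ 2 ^ k)
    (h : ∀ k, HasPartition d (N k) (δ k)) :
    gamma2 d ≤ ∑' k, ENNReal.ofReal (√(2 ^ k) * δ k) := by
  choose cell hcell using h
  refine iInf₂_le_of_le _ (isAdmissible_fibers cell hN₀ hN) (iSup_le fun x => ?_)
  refine ENNReal.tsum_le_tsum fun k => ?_
  have two_rpow : (2 : ℝ≥0∞) ^ ((k : ℝ) / 2) = ENNReal.ofReal √(2 ^ k) := by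
    rw [Real.sqrt_eq_rpow, ← Real.rpow_natCast_mul zero_le_two, mul_one_div,
      ← ENNReal.ofReal_rpow_of_pos two_pos, ENNReal.ofReal_ofNat]
  rw [two_rpow, ENNReal.ofReal_mul (Real.sqrt_nonneg _)]
  gcongr
  refine iSup₂_le fun y hy => iSup₂_le fun z hz => ENNReal.ofReal_le_ofReal ?_
  exact hcell k y z (hy.trans hz.symm)

end Partition

section Sparse

lemma exists_fin_fun_covering {α : Type*} [Nonempty α] (S : Finset α) {m : ℕ} (hm : #S ≤ m) :
    ∃ f : Fin m → α, ∀ a ∈ S, ∃ i, f i = a := by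
  obtain ⟨e⟩ : Nonempty (S ↪ Fin m) := Function.Embedding.nonempty_of_card_le (by simpa)
  exact ⟨Function.extend e (↑) fun _ => Classical.arbitrary α,
    fun a ha => ⟨e ⟨a, ha⟩, e.injective.extend_apply _ _ _⟩⟩

variable {J E X : Type*} [Fintype J]

lemma card_lt_norm_mul_sq_le_sum [SeminormedAddCommGroup E] (f : J → E) {δ : ℝ} (hδ : 0 ≤ δ) :
    #{j | δ < ‖f j‖} * δ ^ 2 ≤ ∑ j, ‖f j‖ ^ 2 :=
  calc #{j | δ < ‖f j‖} * δ ^ 2 ≤ ∑ j with δ < ‖f j‖, ‖f j‖ ^ 2 := by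
        rw [← nsmul_eq_mul]
        refine card_nsmul_le_sum _ _ _ fun j hj => ?_
        gcongr
        exact (mem_filter.1 hj).2.le
    _ ≤ ∑ j, ‖f j‖ ^ 2 :=
        sum_le_sum_of_subset_of_nonneg (subset_univ _) fun _ _ _ => by positivity

lemma norm_le_of_sum_norm_sq_le [SeminormedAddCommGroup E] {f : J → E} {R : ℝ} (hR : 0 ≤ R)
    (hf : ∑ j, ‖f j‖ ^ 2 ≤ R ^ 2) (j : J) : ‖f j‖ ≤ R :=
  (sq_le_sq₀ (norm_nonneg _) hR).1 <|
    (single_le_sum (f := fun j => ‖f j‖ ^ 2) (fun _ _ => sq_nonneg _) (mem_univ j)).trans hf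

-- The label of `x` lists the large coordinates of `F x`, each with a nearby point of `s`.
lemma hasPartition_of_card_lt_norm_le [SeminormedAddCommGroup E] [Nonempty J] {F : X → J → E}
    {s : Finset E} {m : ℕ} {δ : ℝ} (hs : ∀ x j, ∃ a ∈ s, dist (F x j) a ≤ δ)
    (hm : ∀ x, #{j | δ < ‖F x j‖} ≤ m) :
    HasPartition (fun x y => ‖F x - F y‖) ((Fintype.card J * #s) ^ m) (2 * δ) := by
  choose large hlarge using fun x => exists_fin_fun_covering _ (hm x)
  choose net net_mem dist_net using hs
  let label (x : X) (i : Fin m) : J × s := (large x i, ⟨net x (large x i), net_mem x (large x i)⟩)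
  have close_of_large {x y : X} (hxy : label x = label y) {j : J} (hj : δ < ‖F x j‖) :
      ‖F x j - F y j‖ ≤ 2 * δ := by
    obtain ⟨i, rfl⟩ := hlarge x j (by simpa using hj)
    obtain ⟨h_large, h_net⟩ := Prod.ext_iff.1 (congrFun hxy i)
    have h_net' : net x (large x i) = net y (large x i) :=
      (congrArg Subtype.val h_net).trans (congrArg (net y) h_large.symm)
    rw [← dist_eq_norm]
    calc dist (F x (large x i)) (F y (large x i))
        ≤ δ + δ := (dist_triangle_right _ _ _).trans
          (add_le_add (dist_net x _) (h_net' ▸ dist_net y _))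
      _ = 2 * δ := (two_mul δ).symm
  refine HasPartition.of_fintype label (by simp) fun x y hxy => ?_
  refine (pi_norm_le_iff_of_nonempty _).2 fun j => ?_
  rw [Pi.sub_apply]
  by_cases hx : δ < ‖F x j‖
  · exact close_of_large hxy hx
  by_cases hy : δ < ‖F y j‖
  · exact norm_sub_rev (F x j) (F y j) ▸ close_of_large hxy.symm hy
  · linarith [norm_sub_le (F x j) (F y j)]

variable [NormedAddCommGroup E] [NormedSpace ℝ E] [FiniteDimensional ℝ E] [Nonempty J]

lemma hasPartition_two_pow {F : X → J → E} {R r : ℝ} {L b m : ℕ} (hR : 0 < R) (hr : 0 < r)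
    (hr1 : r ≤ 1) (hF : ∀ x j, ‖F x j‖ ≤ R) (hm : ∀ x, #{j | R * r < ‖F x j‖} ≤ m)
    (hJ : Fintype.card J ≤ 2 ^ L) (hb : 3 / r ≤ 2 ^ b) :
    HasPartition (fun x y => ‖F x - F y‖) (2 ^ ((L + b * finrank ℝ E) * m)) (2 * (R * r)) := by
  obtain ⟨s, hs_card, hs⟩ := exists_finset_cover_closedBall (mul_pos hR hr) hR.le (0 : E)
  have net (x : X) (j : J) : ∃ a ∈ s, dist (F x j) a ≤ R * r := by
    simpa using hs (mem_closedBall_zero_iff.2 (hF x j))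
  have base_le : 1 + 2 * R / (R * r) ≤ 2 ^ b :=
    calc 1 + 2 * R / (R * r) = 1 + 2 / r := by field_simp
      _ ≤ 1 / r + 2 / r := by gcongr; exact (one_le_div hr).2 hr1
      _ = 3 / r := by ring
      _ ≤ 2 ^ b := hb
  have s_card_le : #s ≤ 2 ^ (b * finrank ℝ E) := by
    have := hs_card.trans (pow_le_pow_left₀ (by positivity) base_le _)
    rw [← pow_mul] at this
    exact_mod_cast this
  refine (hasPartition_of_card_lt_norm_le net hm).mono ?_
  rw [pow_mul, pow_add]
  gcongr

end Sparse

section Chaining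

/-- The radius of the `k`-th partition used to chain over families `f` of `2 ^ L` vectors with
`∑ j, ‖f j‖ ^ 2 ≤ 1`. For `k < P` the partition is trivial. For `k = P + j` with `j < L`, at most
`2 ^ j` of the vectors are longer than `1 / √(2 ^ j)`, and only these are approximated. From
`k = P + L` on, all of them are. -/
noncomputable def chainingRadius (L P k : ℕ) : ℝ :=
  if k < P then 1 else if k < P + L then 1 / √(2 ^ (k - P))
  else (1 / 2) ^ (2 * L * 2 ^ (k - (P + L)))

variable {L P : ℕ}

lemma chainingRadius_nonneg (L P k : ℕ) : 0 ≤ chainingRadius L P k := by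
  unfold chainingRadius
  split_ifs <;> positivity

lemma chainingRadius_of_lt {k : ℕ} (hk : k < P) : chainingRadius L P k = 1 := if_pos hk

lemma chainingRadius_add {j : ℕ} (hj : j < L) : chainingRadius L P (P + j) = 1 / √(2 ^ j) := by
  simp [chainingRadius, hj]

lemma chainingRadius_add_add (L P i : ℕ) :
    chainingRadius L P (P + L + i) = (1 / 2) ^ (2 * L * 2 ^ i) := by
  rw [chainingRadius, if_neg (by lia), if_neg (by lia), Nat.add_sub_cancel_left]

lemma sum_range_sqrt_two_pow_le (P : ℕ) : ∑ k ∈ range P, √(2 ^ k) ≤ 3 * √(2 ^ P) := by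
  induction P with
  | zero => simp
  | succ P ih =>
    have h : 4 / 3 ≤ √2 := Real.le_sqrt_of_sq_le (by norm_num)
    rw [sum_range_succ, pow_succ, Real.sqrt_mul (by positivity)]
    nlinarith [Real.sqrt_nonneg (2 ^ P)]

lemma sum_chainingRadius_early_le (L P : ℕ) :
    ∑ k ∈ range P, √(2 ^ k) * chainingRadius L P k ≤ 3 * √(2 ^ P) := by
  refine le_of_eq_of_le (sum_congr rfl fun k hk => ?_) (sum_range_sqrt_two_pow_le P)
  rw [chainingRadius_of_lt (mem_range.1 hk), mul_one]

lemma sum_chainingRadius_middle (L P : ℕ) :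
    ∑ j ∈ range L, √(2 ^ (P + j)) * chainingRadius L P (P + j) = L * √(2 ^ P) := by
  have h_term (j : ℕ) (hj : j ∈ range L) :
      √(2 ^ (P + j)) * chainingRadius L P (P + j) = √(2 ^ P) := by
    rw [chainingRadius_add (mem_range.1 hj), pow_add, Real.sqrt_mul (by positivity), mul_assoc,
      mul_one_div_cancel (by positivity), mul_one]
  rw [sum_congr rfl h_term, sum_const, card_range, nsmul_eq_mul]

lemma chainingRadius_late_le (hL : 1 ≤ L) (P i : ℕ) :
    √(2 ^ (P + L + i)) * chainingRadius L P (P + L + i) ≤ √(2 ^ P) * (1 / 2) ^ i := by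
  have h_exp : L + i + i ≤ 2 * L * 2 ^ i := by
    have : i + 1 ≤ 2 ^ i := Nat.lt_two_pow_self
    nlinarith
  have h_sqrt : √(2 ^ (L + i)) ≤ 2 ^ (L + i) :=
    (Real.sqrt_le_left (by positivity)).2
      (le_self_pow₀ (one_le_pow₀ one_le_two) two_ne_zero)
  have h_radius : ((1 : ℝ) / 2) ^ (2 * L * 2 ^ i) ≤ (1 / 2) ^ (L + i + i) :=
    pow_le_pow_of_le_one (by norm_num) (by norm_num) h_exp
  calc √(2 ^ (P + L + i)) * chainingRadius L P (P + L + i)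
      = √(2 ^ P) * (√(2 ^ (L + i)) * (1 / 2) ^ (2 * L * 2 ^ i)) := by
        rw [chainingRadius_add_add, add_assoc, pow_add, Real.sqrt_mul (by positivity), mul_assoc]
    _ ≤ √(2 ^ P) * (2 ^ (L + i) * (1 / 2) ^ (L + i + i)) := by gcongr
    _ = √(2 ^ P) * (1 / 2) ^ i := by
        rw [pow_add _ (L + i) i, ← mul_assoc (2 ^ (L + i)), ← mul_pow,
          mul_one_div_cancel two_ne_zero, one_pow, one_mul]

lemma tsum_chainingRadius_late_le (hL : 1 ≤ L) (P : ℕ) :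
    ∑' i, ENNReal.ofReal (√(2 ^ (P + L + i)) * chainingRadius L P (P + L + i)) ≤
      ENNReal.ofReal (2 * √(2 ^ P)) :=
  calc ∑' i, ENNReal.ofReal (√(2 ^ (P + L + i)) * chainingRadius L P (P + L + i))
      ≤ ∑' i : ℕ, ENNReal.ofReal (√(2 ^ P) * (1 / 2) ^ i) :=
        ENNReal.tsum_le_tsum fun i => ENNReal.ofReal_le_ofReal (chainingRadius_late_le hL P i)
    _ = ENNReal.ofReal (∑' i : ℕ, √(2 ^ P) * (1 / 2) ^ i) :=
        (ENNReal.ofReal_tsum_of_nonneg (fun i => by positivity)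
          (summable_geometric_two.mul_left _)).symm
    _ = ENNReal.ofReal (2 * √(2 ^ P)) := by rw [tsum_mul_left, tsum_geometric_two, mul_comm]

lemma tsum_chainingRadius_le (hL : 1 ≤ L) (P : ℕ) :
    ∑' k, ENNReal.ofReal (√(2 ^ k) * chainingRadius L P k) ≤ ENNReal.ofReal (6 * L * √(2 ^ P)) := by
  have term_nonneg (k : ℕ) : 0 ≤ √(2 ^ k) * chainingRadius L P k :=
    mul_nonneg (Real.sqrt_nonneg _) (chainingRadius_nonneg L P k)
  have hL' : (1 : ℝ) ≤ L := mod_cast hL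
  rw [← Summable.sum_add_tsum_nat_add' (k := P + L) ENNReal.summable,
    ← ENNReal.ofReal_sum_of_nonneg fun k _ => term_nonneg k, sum_range_add,
    sum_chainingRadius_middle]
  simp only [add_comm _ (P + L)]
  calc _ ≤ ENNReal.ofReal (3 * √(2 ^ P) + L * √(2 ^ P)) + ENNReal.ofReal (2 * √(2 ^ P)) := by
        gcongr
        · exact sum_chainingRadius_early_le L P
        · exact tsum_chainingRadius_late_le hL P
    _ = ENNReal.ofReal ((5 + L) * √(2 ^ P)) := by
        rw [← ENNReal.ofReal_add (by positivity) (by positivity)]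
        ring_nf
    _ ≤ ENNReal.ofReal (6 * L * √(2 ^ P)) := by
        gcongr
        linarith

variable {J E X : Type*} [Fintype J] [Nonempty J] [NormedAddCommGroup E] [NormedSpace ℝ E]
  [FiniteDimensional ℝ E] [Nontrivial E] {F : X → J → E} {R : ℝ}

lemma hasPartition_middle (hR : 0 < R) (hF : ∀ x, ∑ j, ‖F x j‖ ^ 2 ≤ R ^ 2)
    (hJ : Fintype.card J ≤ 2 ^ L) (hP : 8 * finrank ℝ E * L ≤ 2 ^ P) {j : ℕ} (hj : j < L) :
    HasPartition (fun x y => ‖F x - F y‖) (2 ^ 2 ^ (P + j)) (2 * (R * (1 / √(2 ^ j)))) := by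
  have one_le_sqrt : 1 ≤ √(2 ^ j) := Real.one_le_sqrt.2 (one_le_pow₀ one_le_two)
  have sq_sqrt : √(2 ^ j) ^ 2 = 2 ^ j := Real.sq_sqrt (by positivity)
  have card_large (x : X) : #{i | R * (1 / √(2 ^ j)) < ‖F x i‖} ≤ 2 ^ j := by
    have h := (card_lt_norm_mul_sq_le_sum (F x) (δ := R * (1 / √(2 ^ j))) (by positivity)).trans
      (hF x)
    have hR_sq : R ^ 2 = 2 ^ j * (R * (1 / √(2 ^ j))) ^ 2 := by
      rw [mul_pow, div_pow, sq_sqrt]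
      field_simp
    exact_mod_cast le_of_mul_le_mul_right (h.trans_eq hR_sq) (by positivity)
  have net_size : 3 / (1 / √(2 ^ j)) ≤ 2 ^ (j + 2) := by
    rw [div_div_eq_mul_div, div_one, pow_add]
    nlinarith
  have label_bits : L + (j + 2) * finrank ℝ E ≤ 2 ^ P := by
    have hd : 1 ≤ finrank ℝ E := finrank_pos
    nlinarith
  refine (hasPartition_two_pow hR (by positivity) ((div_le_one (by positivity)).2 one_le_sqrt)
    (fun x j => ?_) card_large hJ net_size).mono ?_
  · exact norm_le_of_sum_norm_sq_le hR.le (hF x) j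
  · rw [pow_add 2 P j]
    gcongr
    exact one_le_two

lemma hasPartition_late (hR : 0 < R) (hF : ∀ x, ∑ j, ‖F x j‖ ^ 2 ≤ R ^ 2)
    (hJ : Fintype.card J ≤ 2 ^ L) (hL : 1 ≤ L) (hP : 8 * finrank ℝ E * L ≤ 2 ^ P) (i : ℕ) :
    HasPartition (fun x y => ‖F x - F y‖) (2 ^ 2 ^ (P + L + i))
      (2 * (R * (1 / 2) ^ (2 * L * 2 ^ i))) := by
  set a := 2 * L * 2 ^ i with ha
  have net_size : 3 / (1 / 2 : ℝ) ^ a ≤ 2 ^ (a + 2) := by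
    rw [one_div_pow, div_div_eq_mul_div, div_one, pow_add, mul_comm]
    gcongr
    norm_num
  have label_bits : L + (a + 2) * finrank ℝ E ≤ 2 ^ (P + i) := by
    have hd : 1 ≤ finrank ℝ E := finrank_pos
    calc L + (a + 2) * finrank ℝ E ≤ 8 * finrank ℝ E * L * 2 ^ i := by
          rw [ha]
          have h₁ : L ≤ L * (finrank ℝ E * 2 ^ i) := Nat.le_mul_of_pos_right _ (by positivity)
          have h₂ : finrank ℝ E ≤ finrank ℝ E * (L * 2 ^ i) :=
            Nat.le_mul_of_pos_right _ (by positivity)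
          nlinarith
      _ ≤ 2 ^ (P + i) := by
          rw [pow_add]
          gcongr
  refine (hasPartition_two_pow hR (by positivity) (pow_le_one₀ (by norm_num) (by norm_num))
    (fun x j => ?_) (fun x => (card_le_univ _).trans hJ) hJ net_size).mono ?_
  · exact norm_le_of_sum_norm_sq_le hR.le (hF x) j
  · rw [add_right_comm, pow_add 2 (P + i) L]
    gcongr
    exact one_le_two

lemma hasPartition_chainingRadius (hR : 0 < R) (hF : ∀ x, ∑ j, ‖F x j‖ ^ 2 ≤ R ^ 2)
    (hJ : Fintype.card J ≤ 2 ^ L) (hL : 1 ≤ L) (hP : 8 * finrank ℝ E * L ≤ 2 ^ P) (k : ℕ) :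
    HasPartition (fun x y => ‖F x - F y‖) (if k < P then 1 else 2 ^ 2 ^ k)
      (2 * (R * chainingRadius L P k)) := by
  rcases lt_or_ge k P with hk | hk
  · rw [if_pos hk, chainingRadius_of_lt hk, mul_one]
    refine HasPartition.of_forall_le fun x y => (pi_norm_le_iff_of_nonempty _).2 fun j => ?_
    have := norm_le_of_sum_norm_sq_le hR.le (hF x) j
    have := norm_le_of_sum_norm_sq_le hR.le (hF y) j
    rw [Pi.sub_apply]
    linarith [norm_sub_le (F x j) (F y j)]
  rw [if_neg hk.not_gt]
  obtain ⟨j, rfl⟩ := Nat.exists_eq_add_of_le hk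
  rcases lt_or_ge j L with hj | hj
  · rw [chainingRadius_add hj]
    exact hasPartition_middle hR hF hJ hP hj
  · obtain ⟨i, rfl⟩ := Nat.exists_eq_add_of_le hj
    rw [← add_assoc, chainingRadius_add_add]
    exact hasPartition_late hR hF hJ hL hP i

lemma exists_le_two_pow_le {x : ℕ} (hx : 1 ≤ x) : ∃ P, x ≤ 2 ^ P ∧ 2 ^ P ≤ 2 * x := by
  obtain ⟨P, hPx, hxP⟩ := exists_nat_pow_near hx one_lt_two
  exact ⟨P + 1, hxP.le, by rw [pow_succ]; lia⟩

theorem gamma2_le_of_sum_norm_sq_le (hR : 0 < R) (hF : ∀ x, ∑ j, ‖F x j‖ ^ 2 ≤ R ^ 2)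
    (hJ : Fintype.card J ≤ 2 ^ L) (hL : 1 ≤ L) :
    gamma2 (fun x y => ‖F x - F y‖) ≤ ENNReal.ofReal (48 * R * √(finrank ℝ E * L ^ 3)) := by
  have hd : 1 ≤ finrank ℝ E := finrank_pos
  obtain ⟨P, hP, hP'⟩ := exists_le_two_pow_le (show 1 ≤ 8 * finrank ℝ E * L by nlinarith)
  have hP₀ : 0 < P := Nat.pos_of_ne_zero fun h => by
    rw [h] at hP
    nlinarith
  have sqrt_two_pow_le : √(2 ^ P) ≤ 4 * √(finrank ℝ E * L) := by
    refine Real.sqrt_le_iff.2 ⟨by positivity, ?_⟩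
    rw [mul_pow, Real.sq_sqrt (by positivity)]
    exact_mod_cast hP'.trans_eq (by ring)
  calc gamma2 (fun x y => ‖F x - F y‖)
      ≤ ∑' k, ENNReal.ofReal (√(2 ^ k) * (2 * (R * chainingRadius L P k))) :=
        gamma2_le_tsum (N := fun k => if k < P then 1 else 2 ^ 2 ^ k) (if_pos hP₀)
          (fun k => by split_ifs <;> simp [Nat.one_le_two_pow])
          (hasPartition_chainingRadius hR hF hJ hL hP)
    _ = ENNReal.ofReal (2 * R) * ∑' k, ENNReal.ofReal (√(2 ^ k) * chainingRadius L P k) := by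
        rw [← ENNReal.tsum_mul_left]
        refine tsum_congr fun k => ?_
        rw [← ENNReal.ofReal_mul (by positivity)]
        ring_nf
    _ ≤ ENNReal.ofReal (2 * R) * ENNReal.ofReal (6 * L * √(2 ^ P)) := by
        gcongr
        exact tsum_chainingRadius_le hL P
    _ ≤ ENNReal.ofReal (2 * R) * ENNReal.ofReal (6 * L * (4 * √(finrank ℝ E * L))) := by
        gcongr
    _ = ENNReal.ofReal (48 * R * √(finrank ℝ E * L ^ 3)) := by
        have sqrt_eq : √(finrank ℝ E * L ^ 3) = L * √(finrank ℝ E * L) := by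
          rw [show (finrank ℝ E * L ^ 3 : ℝ) = L ^ 2 * (finrank ℝ E * L) by ring,
            Real.sqrt_mul (by positivity), Real.sqrt_sq (by positivity)]
        rw [← ENNReal.ofReal_mul (by positivity), sqrt_eq]
        ring_nf

end Chaining

section Main

lemma natLog_two_add_two_le_two_mul_log {T : ℕ} (hT : 1 ≤ T) :
    (Nat.log 2 T + 2 : ℕ) ≤ 2 * Real.log (Real.exp 1 * T) := by
  have hT' : (0 : ℝ) < T := mod_cast hT
  have hlog : Nat.log 2 T * Real.log 2 ≤ Real.log T := by
    rw [← Real.log_pow]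
    exact Real.log_le_log (by positivity) (mod_cast Nat.pow_log_le_self 2 (by lia))
  rw [Real.log_mul (Real.exp_pos 1).ne' hT'.ne', Real.log_exp]
  push_cast
  nlinarith [Real.log_two_gt_d9, (Nat.cast_nonneg (Nat.log 2 T) : (0 : ℝ) ≤ _)]

lemma log_exp_one_mul_pow_three_le {T p : ℝ} (hT : 1 ≤ T) (hp : 1 ≤ p) :
    Real.log (Real.exp 1 * T) ^ 3 ≤
      25 * min T (Real.log (Real.exp 1 * T * p) ^ 2 * Real.log (Real.exp 1 * T) ^ 2) := by
  set a := Real.log (Real.exp 1 * T) with ha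
  set b := Real.log (Real.exp 1 * T * p)
  have ha₁ : 1 ≤ a := by
    rw [ha, Real.log_mul (by positivity) (by positivity), Real.log_exp]
    linarith [Real.log_nonneg hT]
  have hab : a ≤ b := Real.log_le_log (by positivity) (le_mul_of_one_le_right (by positivity) hp)
  rw [mul_min_of_nonneg _ _ (by norm_num)]
  refine le_min ?_ ?_
  · have h_exp : a ^ 3 / 6 ≤ Real.exp 1 * T := by
      simpa [Nat.factorial, ha, Real.exp_log (show 0 < Real.exp 1 * T by positivity)]
        using Real.pow_div_factorial_le_exp a (by positivity) 3
    nlinarith [Real.exp_one_lt_d9]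
  · calc a ^ 3 = a * a ^ 2 := pow_succ' a 2
      _ ≤ b ^ 2 * a ^ 2 := by
        gcongr
        nlinarith
      _ ≤ 25 * (b ^ 2 * a ^ 2) := le_mul_of_one_le_left (by positivity) (by norm_num)

lemma sqrt_mul_mul_log_pow_three_le {T p : ℝ} (hT : 1 ≤ T) (hp : 1 ≤ p) :
    √(T * p * Real.log (Real.exp 1 * T) ^ 3) ≤
      5 * √(T * p *
        min T (Real.log (Real.exp 1 * T * p) ^ 2 * Real.log (Real.exp 1 * T) ^ 2)) := by
  have h_sqrt : √(5 ^ 2) = 5 := Real.sqrt_sq (by norm_num)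
  rw [← h_sqrt, ← Real.sqrt_mul (by norm_num), mul_left_comm]
  gcongr
  norm_num1
  exact log_exp_one_mul_pow_three_le hT hp

theorem stmt4_general {X : Type*} {T p : ℕ} (hT : 1 ≤ T) (hp : 1 ≤ p) (n : ℕ)
    (v : X → Fin T → Fin p → ℝ) (hv : ∀ x, ∑ i, ∑ k, v x i k ^ 2 ≤ 1) :
    gamma2 (fun x y => opNorm (Toep T p n (v x - v y))) ≤
      ENNReal.ofReal (384 * √(T * p * Real.log (Real.exp 1 * T) ^ 3)) := by
  have : NeZero T := ⟨by lia⟩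
  have : NeZero p := ⟨by lia⟩
  let F (x : X) : ZMod (2 * T) → EuclideanSpace ℂ (Fin p) := √2 • toepSymbol (v x)
  set L := Nat.log 2 T + 2 with hL
  have opNorm_le (x y : X) : opNorm (Toep T p n (v x - v y)) ≤ ‖F x - F y‖ := by
    refine (opNorm_Toep_le (v x - v y)).trans_eq ?_
    rw [toepSymbol_sub, ← smul_sub, norm_smul, Real.norm_of_nonneg (Real.sqrt_nonneg 2)]
  have sum_norm_sq_le (x : X) : ∑ k, ‖F x k‖ ^ 2 ≤ (2 * √T) ^ 2 := by
    simp only [F, Pi.smul_apply, norm_smul, mul_pow, Real.norm_eq_abs, sq_abs,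
      Real.sq_sqrt zero_le_two, ← mul_sum, sum_norm_sq_toepSymbol, Real.sq_sqrt (Nat.cast_nonneg T)]
    nlinarith [mul_le_mul_of_nonneg_left (hv x) (Nat.cast_nonneg (α := ℝ) T)]
  have card_le : Fintype.card (ZMod (2 * T)) ≤ 2 ^ L := by
    have := Nat.lt_pow_succ_log_self one_lt_two T
    rw [ZMod.card, hL, pow_succ]
    lia
  have finrank_eq : finrank ℝ (EuclideanSpace ℂ (Fin p)) = 2 * p := by
    rw [finrank_real_of_complex, finrank_euclideanSpace_fin]
  refine (gamma2_mono opNorm_le).trans <| (gamma2_le_of_sum_norm_sq_le (by positivity)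
    sum_norm_sq_le card_le (by lia)).trans <| ENNReal.ofReal_le_ofReal ?_
  calc 48 * (2 * √T) * √(finrank ℝ (EuclideanSpace ℂ (Fin p)) * L ^ 3)
      ≤ 48 * (2 * √T) * √((2 * p : ℕ) * (2 * Real.log (Real.exp 1 * T)) ^ 3) := by
        rw [finrank_eq]
        gcongr
        exact natLog_two_add_two_le_two_mul_log hT
    _ = 96 * √(4 ^ 2 * (T * p * Real.log (Real.exp 1 * T) ^ 3)) := by
        rw [← mul_assoc, mul_assoc, ← Real.sqrt_mul (Nat.cast_nonneg T)]
        push_cast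
        ring_nf
    _ = 384 * √(T * p * Real.log (Real.exp 1 * T) ^ 3) := by
        rw [Real.sqrt_mul (by positivity), Real.sqrt_sq (by positivity)]
        ring

end Main

theorem stmt4 :
    ∃ C : ℝ, 0 < C ∧
      ∀ T p n : ℕ, 1 ≤ T → 1 ≤ p → 1 ≤ n →
        gamma2 (fun x y : {v : Fin T → Fin p → ℝ // ∑ i, ∑ k, (v i k) ^ 2 = 1} =>
            opNorm (Toep T p n (x.1 - y.1))) ≤
          ENNReal.ofReal (C * Real.sqrt ((T : ℝ) * p *
            min (T : ℝ)
              ((Real.log (Real.exp 1 * T * p)) ^ 2 * (Real.log (Real.exp 1 * T)) ^ 2))) := by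
  refine ⟨1920, by norm_num, fun T p n hT hp _ =>
    (stmt4_general hT hp n _ fun x => x.2.le).trans (ENNReal.ofReal_le_ofReal ?_)⟩
  linarith [sqrt_mul_mul_log_pow_three_le (Nat.one_le_cast.2 hT) (Nat.one_le_cast.2 hp)]
end

section
/- For all integers T, p, n ≥ 1 and every v̄ = (v₁, …, v_T) ∈ (ℝ^p)^T, the banded block-Toeplitz matrix Toep_{T,n}(v̄) satisfies ‖v̄‖₂ ≤ ‖Toep_{T,n}(v̄)‖_op ≤ √T · ‖v̄‖₂, where ‖v̄‖₂ = (Σ_{i=1}^T ‖v_i‖₂²)^{1/2}. -/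
/-!
Each row of the Toeplitz matrix is a rearrangement of `v̄` padded with zeros, so it has Euclidean
norm `‖v̄‖₂`; and the operator norm dominates the norm of every row. For the upper bound, apply
Cauchy–Schwarz in each row to the part of `x` that this row meets: a column meets at most `T` rows,
so every coordinate of `x` is counted at most `T` times.
-/

open Finset
open scoped Matrix

section MulVec

variable {α β R : Type*} [Fintype β] [CommRing R] [LinearOrder R] [IsStrictOrderedRing R]

lemma sq_mulVec_apply_le_sum_sq_mul_sum_support (A : Matrix α β R) (x : β → R) (i : α) :
    (A *ᵥ x) i ^ 2 ≤ (∑ j, A i j ^ 2) * ∑ j with A i j ≠ 0, x j ^ 2 := by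
  have mulVec_eq_sum_support : (A *ᵥ x) i = ∑ j with A i j ≠ 0, A i j * x j :=
    (sum_filter_of_ne fun _ _ => left_ne_zero_of_mul).symm
  have sum_sq_eq_sum_support : ∑ j, A i j ^ 2 = ∑ j with A i j ≠ 0, A i j ^ 2 :=
    (sum_filter_of_ne fun _ _ => by simp).symm
  rw [mulVec_eq_sum_support, sum_sq_eq_sum_support]
  exact sum_mul_sq_le_sq_mul_sq _ _ _

lemma sum_sq_mulVec_le_of_card_col_le [Fintype α] {A : Matrix α β R} {N : ℕ} {S : R} (hS : 0 ≤ S)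
    (hcol : ∀ j, #{i | A i j ≠ 0} ≤ N) (hrow : ∀ i, ∑ j, A i j ^ 2 ≤ S) (x : β → R) :
    ∑ i, (A *ᵥ x) i ^ 2 ≤ N * S * ∑ j, x j ^ 2 :=
  calc ∑ i, (A *ᵥ x) i ^ 2
      ≤ ∑ i, S * ∑ j with A i j ≠ 0, x j ^ 2 := by
        gcongr with i
        exact (sq_mulVec_apply_le_sum_sq_mul_sum_support A x i).trans <| by gcongr; exact hrow i
    _ = S * ∑ j, #{i | A i j ≠ 0} * x j ^ 2 := by
        simp only [← mul_sum, sum_filter]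
        rw [sum_comm]
        simp only [← sum_filter, sum_const, nsmul_eq_mul]
    _ ≤ S * ∑ j, N * x j ^ 2 := by
        gcongr with j
        exact hcol j
    _ = N * S * ∑ j, x j ^ 2 := by
        rw [← mul_sum]
        ring

end MulVec

section OpNorm

variable {α β : Type*} [Fintype α] [Fintype β] [DecidableEq β]

lemma opNorm_transpose [DecidableEq α] (A : Matrix α β ℝ) : opNorm Aᵀ = opNorm A := by
  rw [← Matrix.conjTranspose_eq_transpose_of_trivial]
  exact Matrix.l2_opNorm_conjTranspose A

lemma sqrt_sum_sq_col_le_opNorm (A : Matrix α β ℝ) (j : β) : √(∑ i, A i j ^ 2) ≤ opNorm A := by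
  have norm_col_le := (Matrix.toEuclideanLin A).toContinuousLinearMap.le_opNorm
    (EuclideanSpace.single j 1)
  simpa [EuclideanSpace.norm_eq, opNorm] using norm_col_le

lemma sqrt_sum_sq_row_le_opNorm (A : Matrix α β ℝ) (i : α) : √(∑ j, A i j ^ 2) ≤ opNorm A := by
  classical
  rw [← opNorm_transpose]
  exact sqrt_sum_sq_col_le_opNorm Aᵀ i

lemma opNorm_le_sqrt_mul_sqrt_of_card_col_le {A : Matrix α β ℝ} {N : ℕ} {S : ℝ} (hS : 0 ≤ S)
    (hcol : ∀ j, #{i | A i j ≠ 0} ≤ N) (hrow : ∀ i, ∑ j, A i j ^ 2 ≤ S) :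
    opNorm A ≤ √N * √S := by
  refine ContinuousLinearMap.opNorm_le_bound _ (by positivity) fun x => ?_
  refine le_of_sq_le_sq ?_ (by positivity)
  rw [mul_pow, mul_pow, Real.sq_sqrt N.cast_nonneg, Real.sq_sqrt hS,
    EuclideanSpace.real_norm_sq_eq, EuclideanSpace.real_norm_sq_eq]
  exact sum_sq_mulVec_le_of_card_col_le hS hcol hrow x

end OpNorm

section Toep

variable {T p n : ℕ}

/-- The index of the block column in which row `i` of `Toep T p n v` carries `v t`. With `t`
counted from `0`, the blocks appear in reverse order, starting from `v (T - 1)` at column `i`. -/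
def bandColumn (i : Fin n) (t : Fin T) : Fin (n + T - 1) :=
  ⟨i + (T - 1 - t), by omega⟩

lemma bandColumn_right_injective (i : Fin n) : Function.Injective (bandColumn (T := T) i) := by
  intro s t h
  simp only [bandColumn, Fin.mk.injEq] at h
  omega

lemma bandColumn_left_injective (t : Fin T) :
    Function.Injective fun i : Fin n => bandColumn i t := by
  intro i i' h
  simp only [bandColumn, Fin.mk.injEq] at h
  omega

lemma Toep_apply_bandColumn (v : Fin T → Fin p → ℝ) (i : Fin n) (t : Fin T) (k : Fin p) :
    Toep T p n v i (bandColumn i t, k) = v t k := by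
  have ht : T - 1 - (i + (T - 1 - t) - i) = (t : ℕ) := by omega
  simp only [Toep, bandColumn, Matrix.of_apply, ht]
  exact dif_pos (by omega)

lemma exists_bandColumn_eq_of_Toep_ne_zero {v : Fin T → Fin p → ℝ} {i : Fin n}
    {j : Fin (n + T - 1)} {k : Fin p} (h : Toep T p n v i (j, k) ≠ 0) :
    ∃ t, bandColumn i t = j := by
  obtain ⟨⟨hij, hlt, hT⟩, -⟩ := dite_ne_right_iff.mp h
  refine ⟨⟨T - 1 - (j - i), hT⟩, Fin.ext ?_⟩
  dsimp only at hij hlt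
  simp only [bandColumn]
  omega

lemma sum_sq_row_Toep (v : Fin T → Fin p → ℝ) (i : Fin n) :
    ∑ jk, Toep T p n v i jk ^ 2 = ∑ t, ∑ k, v t k ^ 2 := by
  rw [Fintype.sum_prod_type]
  symm
  refine Fintype.sum_of_injective _ (bandColumn_right_injective i) _ _ (fun j hj => ?_) fun t => ?_
  · refine sum_eq_zero fun k _ => pow_eq_zero_iff two_ne_zero |>.mpr ?_
    exact of_not_not fun h => hj (exists_bandColumn_eq_of_Toep_ne_zero h)
  · simp only [Toep_apply_bandColumn]

lemma card_col_Toep_le (v : Fin T → Fin p → ℝ) (jk : Fin (n + T - 1) × Fin p) :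
    #{i | Toep T p n v i jk ≠ 0} ≤ T := by
  refine le_of_le_of_eq ?_ (card_fin T)
  refine card_le_card_of_forall_subsingleton (fun i t => bandColumn i t = jk.1) ?_ ?_
  · intro i hi
    obtain ⟨t, ht⟩ := exists_bandColumn_eq_of_Toep_ne_zero (mem_filter.mp hi).2
    exact ⟨t, mem_univ t, ht⟩
  · rintro t - i ⟨-, hi⟩ i' ⟨-, hi'⟩
    exact bandColumn_left_injective t (hi.trans hi'.symm)

end Toep

theorem stmt5 (T p n : ℕ) (hT : 1 ≤ T) (hp : 1 ≤ p) (hn : 1 ≤ n)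
    (v : Fin T → Fin p → ℝ) :
    Real.sqrt (∑ i, ∑ k, (v i k) ^ 2) ≤ opNorm (Toep T p n v) ∧
    opNorm (Toep T p n v) ≤ Real.sqrt T * Real.sqrt (∑ i, ∑ k, (v i k) ^ 2) := by
  have hrow : ∀ i, ∑ jk, Toep T p n v i jk ^ 2 = ∑ t, ∑ k, v t k ^ 2 := sum_sq_row_Toep v
  constructor
  · rw [← hrow ⟨0, hn⟩]
    exact sqrt_sum_sq_row_le_opNorm _ _
  · exact opNorm_le_sqrt_mul_sqrt_of_card_col_le (by positivity) (card_col_Toep_le v)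
      fun i => (hrow i).le
end

section
/- Let Z be a real-valued random variable, let C, D > 0 be constants, and let M be a nonnegative random variable (on the same probability space) such that for every κ > 0 and every δ ∈ (0,1), P[ Z ≥ C·(κ + M)·√( log(1/δ) + D + log(1 + M/κ) ) ] ≤ δ. Then for every β > 0, every κ > 0, and every δ ∈ (0,1), P[ Z ≥ C·((1+β)·M + κ)·√( log(2/δ) + 2·lil(β·M/κ) + D + log(1 + e/β) ) ] ≤ δ, where lil(x) := log₊(log₊(x)) and log₊(x) := max{1, log x}. -/
open MeasureTheory

/-- `log₊ x = max{1, log x}`. -/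
noncomputable def logplus (x : ℝ) : ℝ := max 1 (Real.log x)

/-- `lil x = log₊(log₊ x)`. -/
noncomputable def lil (x : ℝ) : ℝ := logplus (logplus x)

/-!
Apply the hypothesis at the scales `κ * exp n`, `n : ℕ`, with confidence levels
`δ / 2 * exp (-2 * logplus n)`, whose sum is at most `δ` because `∑ exp (-2 * logplus n) ≤ 2`.
At an outcome with `x = β * M / κ`, the scale `n = ⌊log x⌋₊` satisfies `exp n ≤ max 1 x` and
`x ≤ exp (n + 1)`. The first inequality gives `κ * exp n + M ≤ (1 + β) * M + κ`, the second
`M / (κ * exp n) ≤ e / β`, and `n ≤ logplus x` shows that the confidence level costs at most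
`2 * logplus n ≤ 2 * lil x`.
-/

open Real Set

theorem one_le_logplus (x : ℝ) : 1 ≤ logplus x := le_max_left _ _

theorem log_le_logplus (x : ℝ) : log x ≤ logplus x := le_max_right _ _

theorem monotoneOn_logplus : MonotoneOn logplus (Ici 0) := by
  intro x hx y _ hxy
  rcases (mem_Ici.1 hx).eq_or_lt with rfl | hx_pos
  · simp [logplus]
  · exact max_le_max_left 1 (log_le_log hx_pos hxy)

theorem exp_floor_log_le_max {x : ℝ} (hx : 0 ≤ x) : exp ⌊log x⌋₊ ≤ max 1 x := by
  rcases le_total x 1 with hx_le | hx_ge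
  · simp [Nat.floor_of_nonpos (log_nonpos hx hx_le)]
  · have hx_pos : 0 < x := one_pos.trans_le hx_ge
    exact ((le_log_iff_exp_le hx_pos).1 (Nat.floor_le (log_nonneg hx_ge))).trans
      (le_max_right 1 x)

theorem le_exp_floor_log_add_one (x : ℝ) : x ≤ exp (⌊log x⌋₊ + 1) :=
  (le_exp_log x).trans (exp_le_exp.2 (Nat.lt_floor_add_one _).le)

theorem logplus_floor_log_le_lil (x : ℝ) : logplus ⌊log x⌋₊ ≤ lil x := by
  have logplus_nonneg : 0 ≤ logplus x := zero_le_one.trans (one_le_logplus x)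
  have floor_le : (⌊log x⌋₊ : ℝ) ≤ logplus x :=
    (Nat.cast_le.2 (Nat.floor_mono (log_le_logplus x))).trans (Nat.floor_le logplus_nonneg)
  exact monotoneOn_logplus (mem_Ici.2 (Nat.cast_nonneg _)) logplus_nonneg floor_le

/-- The relative share of the failure probability spent on the `n`-th scale of the union bound:
`n⁻²`, capped at `e⁻²` (also at `n = 0`, where `Real.log 0 = 0`). -/
noncomputable def lilWeight (n : ℕ) : ℝ := exp (-2 * logplus n)

theorem lilWeight_pos (n : ℕ) : 0 < lilWeight n := exp_pos _

theorem lilWeight_le_one (n : ℕ) : lilWeight n ≤ 1 :=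
  exp_le_one_iff.2 (by linarith [one_le_logplus n])

theorem lilWeight_zero_le : lilWeight 0 ≤ 1 / 4 :=
  calc lilWeight 0 = (exp 1 ^ 2)⁻¹ := by
        rw [← exp_nat_mul, ← exp_neg]
        norm_num [lilWeight, logplus]
    _ ≤ (2 ^ 2)⁻¹ := by gcongr; linarith [add_one_le_exp 1]
    _ = 1 / 4 := by norm_num

theorem lilWeight_le_one_div_sq {n : ℕ} (hn : n ≠ 0) : lilWeight n ≤ 1 / (n : ℝ) ^ 2 :=
  calc lilWeight n ≤ exp (-(2 * log n)) := exp_le_exp.2 (by linarith [log_le_logplus n])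
    _ = 1 / (n : ℝ) ^ 2 := by
        rw [exp_neg, ← Nat.cast_two, exp_nat_mul, exp_log (by positivity), one_div]

-- At `n = 0` the first summand is the junk value `1 / 0 = 0`.
theorem lilWeight_le_one_div_sq_add_ite (n : ℕ) :
    lilWeight n ≤ 1 / (n : ℝ) ^ 2 + if n = 0 then 1 / 4 else 0 := by
  rcases eq_or_ne n 0 with rfl | hn
  · simpa using lilWeight_zero_le
  · simpa [hn] using lilWeight_le_one_div_sq hn

theorem hasSum_one_div_sq_add_ite :
    HasSum (fun n : ℕ ↦ 1 / (n : ℝ) ^ 2 + if n = 0 then 1 / 4 else 0) (π ^ 2 / 6 + 1 / 4) :=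
  hasSum_zeta_two.add (hasSum_ite_eq 0 (1 / 4))

theorem summable_lilWeight : Summable lilWeight :=
  .of_nonneg_of_le (fun n ↦ (lilWeight_pos n).le) lilWeight_le_one_div_sq_add_ite
    hasSum_one_div_sq_add_ite.summable

theorem tsum_lilWeight_le_two : ∑' n, lilWeight n ≤ 2 :=
  calc ∑' n, lilWeight n ≤ π ^ 2 / 6 + 1 / 4 :=
        hasSum_le lilWeight_le_one_div_sq_add_ite summable_lilWeight.hasSum
          hasSum_one_div_sq_add_ite
    _ ≤ 2 := by nlinarith [pi_pos, pi_lt_d2]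

theorem log_one_div_mul_lilWeight {δ : ℝ} (hδ : δ ≠ 0) (n : ℕ) :
    log (1 / (δ * lilWeight n)) = log (1 / δ) + 2 * logplus n := by
  rw [one_div, one_div, log_inv, log_inv, log_mul hδ (lilWeight_pos n).ne', lilWeight, log_exp]
  ring

section Scale

variable {β κ m : ℝ}

theorem mul_exp_floor_log_add_le (hβ : 0 ≤ β) (hκ : 0 < κ) (hm : 0 ≤ m) :
    κ * exp ⌊log (β * m / κ)⌋₊ + m ≤ (1 + β) * m + κ := by
  have exp_le : exp ⌊log (β * m / κ)⌋₊ ≤ 1 + β * m / κ :=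
    (exp_floor_log_le_max (by positivity)).trans (max_le_add_of_nonneg zero_le_one (by positivity))
  calc κ * exp ⌊log (β * m / κ)⌋₊ + m ≤ κ * (1 + β * m / κ) + m := by gcongr
    _ = (1 + β) * m + κ := by field_simp; ring

theorem div_mul_exp_floor_log_le (hβ : 0 < β) (hκ : 0 < κ) :
    m / (κ * exp ⌊log (β * m / κ)⌋₊) ≤ exp 1 / β := by
  have ratio_le := le_exp_floor_log_add_one (β * m / κ)
  rw [exp_add, div_le_iff₀ hκ] at ratio_le
  rw [div_le_div_iff₀ (by positivity) hβ]
  linarith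

end Scale

section Measure

variable {Ω : Type*} {m0 : MeasurableSpace Ω} {μ : Measure Ω}

theorem measure_iUnion_le_ofReal_tsum {ι : Type*} [Countable ι] {s : ι → Set Ω} {f : ι → ℝ}
    (hf_nonneg : ∀ i, 0 ≤ f i) (hf : Summable f) (hs : ∀ i, μ (s i) ≤ ENNReal.ofReal (f i)) :
    μ (⋃ i, s i) ≤ ENNReal.ofReal (∑' i, f i) :=
  calc μ (⋃ i, s i) ≤ ∑' i, μ (s i) := measure_iUnion_le s
    _ ≤ ∑' i, ENNReal.ofReal (f i) := ENNReal.tsum_le_tsum hs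
    _ = ENNReal.ofReal (∑' i, f i) := (ENNReal.ofReal_tsum_of_nonneg hf_nonneg hf).symm

theorem measure_iUnion_half_mul_lilWeight_le {E : ℕ → ℝ → Set Ω}
    (hE : ∀ n δ, 0 < δ → δ < 1 → μ (E n δ) ≤ ENNReal.ofReal δ) {δ : ℝ} (hδ : 0 < δ)
    (hδ1 : δ < 1) : μ (⋃ n, E n (δ / 2 * lilWeight n)) ≤ ENNReal.ofReal δ := by
  have level_pos (n : ℕ) : 0 < δ / 2 * lilWeight n := mul_pos (half_pos hδ) (lilWeight_pos n)
  have level_lt_one (n : ℕ) : δ / 2 * lilWeight n < 1 :=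
    mul_lt_one_of_nonneg_of_lt_one_left (by positivity) (by linarith) (lilWeight_le_one n)
  calc μ (⋃ n, E n (δ / 2 * lilWeight n))
      ≤ ENNReal.ofReal (∑' n, δ / 2 * lilWeight n) :=
        measure_iUnion_le_ofReal_tsum (fun n ↦ (level_pos n).le)
          (summable_lilWeight.mul_left (δ / 2)) fun n ↦ hE n _ (level_pos n) (level_lt_one n)
    _ ≤ ENNReal.ofReal δ := by
        rw [tsum_mul_left]
        exact ENNReal.ofReal_le_ofReal (by nlinarith [tsum_lilWeight_le_two])

theorem stmt7_general {Z M : Ω → ℝ} (hM : ∀ ω, 0 ≤ M ω) {ψ : ℝ → ℝ} (hψ_mono : Monotone ψ)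
    (hψ_nonneg : ∀ x, 0 ≤ ψ x)
    (h : ∀ κ, 0 < κ → ∀ δ, 0 < δ → δ < 1 →
      μ {ω | (κ + M ω) * ψ (log (1 / δ) + log (1 + M ω / κ)) ≤ Z ω} ≤ ENNReal.ofReal δ)
    {β κ δ : ℝ} (hβ : 0 < β) (hκ : 0 < κ) (hδ : 0 < δ) (hδ1 : δ < 1) :
    μ {ω | ((1 + β) * M ω + κ) *
        ψ (log (2 / δ) + 2 * lil (β * M ω / κ) + log (1 + exp 1 / β)) ≤ Z ω} ≤
      ENNReal.ofReal δ := by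
  let E (n : ℕ) (δ : ℝ) : Set Ω :=
    {ω | (κ * exp n + M ω) * ψ (log (1 / δ) + log (1 + M ω / (κ * exp n))) ≤ Z ω}
  have hE (n : ℕ) : ∀ δ, 0 < δ → δ < 1 → μ (E n δ) ≤ ENNReal.ofReal δ := h _ (by positivity)
  refine (measure_mono fun ω hω ↦ ?_).trans (measure_iUnion_half_mul_lilWeight_le hE hδ hδ1)
  refine mem_iUnion.2 ⟨⌊log (β * M ω / κ)⌋₊, mem_ofPred.2 (le_trans ?_ hω)⟩
  have hMω := hM ω
  rw [log_one_div_mul_lilWeight (by positivity), one_div_div]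
  refine mul_le_mul (mul_exp_floor_log_add_le hβ.le hκ hMω) (hψ_mono ?_) (hψ_nonneg _)
    (by positivity)
  gcongr _ + 2 * ?_ + log (1 + ?_)
  · exact logplus_floor_log_le_lil _
  · exact div_mul_exp_floor_log_le hβ hκ

end Measure

/-- The iterated-logarithm conversion lemma. -/
theorem stmt7 {Ω : Type} {m0 : MeasurableSpace Ω} (μ : Measure Ω) [IsProbabilityMeasure μ]
    (Z M : Ω → ℝ) (hZm : Measurable Z) (hMm : Measurable M) (hM : ∀ ω, 0 ≤ M ω)
    (C D : ℝ) (hC : 0 < C) (hD : 0 < D)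
    (h : ∀ κ : ℝ, 0 < κ → ∀ δ : ℝ, 0 < δ → δ < 1 →
      μ {ω | C * (κ + M ω) *
          Real.sqrt (Real.log (1 / δ) + D + Real.log (1 + M ω / κ)) ≤ Z ω} ≤
        ENNReal.ofReal δ) :
    ∀ β : ℝ, 0 < β → ∀ κ : ℝ, 0 < κ → ∀ δ : ℝ, 0 < δ → δ < 1 →
      μ {ω | C * ((1 + β) * M ω + κ) *
          Real.sqrt (Real.log (2 / δ) + 2 * lil (β * M ω / κ) + D +
            Real.log (1 + Real.exp 1 / β)) ≤ Z ω} ≤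
        ENNReal.ofReal δ := by
  intro β hβ κ hκ δ hδ hδ1
  simp only [mul_assoc C, mul_left_comm C, add_right_comm _ D] at h ⊢
  exact stmt7_general hM (ψ := fun x ↦ C * √(x + D)) (fun x y hxy ↦ by beta_reduce; gcongr)
    (fun x ↦ by positivity) h hβ hκ hδ hδ1
end

section
/- Let Ñ, L̄, m ≥ 1, let K ∈ ℝ^{Ñ×L̄}, let μ > 0, and for A ∈ ℝ^{Ñ×m} define ridge(A, μ) ∈ ℝ^{m×L̄} by ridge(A, μ)ᵀ := (KᵀK + μ²I_{L̄})^{−1}·Kᵀ·A. Then: (a) ridge(A, μ) is the unique minimizer over φ ∈ ℝ^{m×L̄} of the strictly convex objective ‖Kφᵀ − A‖_F² + μ²·‖φ‖_F² (in particular A ↦ ridge(A, μ) is linear in A); and (b) ridge(A, μ) minimizes over φ ∈ ℝ^{m×L̄} the operator norm ‖ vcat(Kφᵀ − A, μφᵀ) ‖_op of the vertical concatenation of Kφᵀ − A ∈ ℝ^{Ñ×m} and μφᵀ ∈ ℝ^{L̄×m}. -/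
open Matrix

/-- Squared Frobenius norm. -/
def frobSq {α β : Type*} [Fintype α] [Fintype β] (A : Matrix α β ℝ) : ℝ :=
  ∑ i, ∑ j, (A i j) ^ 2

/-- The ridge estimator `ridge(A, μ)ᵀ = (KᵀK + μ²I)⁻¹ Kᵀ A`. -/
noncomputable def ridge {Nt L m : ℕ} (K : Matrix (Fin Nt) (Fin L) ℝ) (μ : ℝ)
    (A : Matrix (Fin Nt) (Fin m) ℝ) : Matrix (Fin m) (Fin L) ℝ :=
  ((Kᵀ * K + μ ^ 2 • (1 : Matrix (Fin L) (Fin L) ℝ))⁻¹ * Kᵀ * A)ᵀ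

/-!
Stacking `K` over `μI` and `A` over `0` turns the ridge problem into the ordinary least-squares
problem of fitting `BX` to `C`, whose normal equation `Bᵀ(BX - C) = 0` is solved by the ridge
estimator. At such a solution `R`, the residual `BR - C` is column-wise orthogonal to the range
of `B`, so `BX - C = (BR - C) + B(X - R)` is a Pythagorean decomposition. It holds for Frobenius
norms and also after applying both sides to any vector, hence the optimality in both norms;
uniqueness follows since `BᵀB = KᵀK + μ²I` is invertible.
-/

section Orthogonality

variable {ι κ : Type*} [Fintype ι] [Fintype κ]

lemma frobSq_eq_trace (X : Matrix ι κ ℝ) : frobSq X = (Xᵀ * X).trace := by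
  simp only [frobSq, trace, diag_apply, mul_apply, transpose_apply, ← sq]
  exact Finset.sum_comm

lemma frobSq_transpose (X : Matrix ι κ ℝ) : frobSq Xᵀ = frobSq X :=
  Finset.sum_comm

lemma frobSq_smul (c : ℝ) (X : Matrix ι κ ℝ) : frobSq (c • X) = c ^ 2 * frobSq X := by
  simp only [frobSq, Matrix.smul_apply, smul_eq_mul, mul_pow, Finset.mul_sum]

lemma frobSq_fromRows {ι' : Type*} [Fintype ι'] (X : Matrix ι κ ℝ) (Y : Matrix ι' κ ℝ) :
    frobSq (fromRows X Y) = frobSq X + frobSq Y :=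
  Fintype.sum_sum_type _

lemma frobSq_nonneg (X : Matrix ι κ ℝ) : 0 ≤ frobSq X := by
  unfold frobSq
  positivity

lemma frobSq_eq_zero_iff {X : Matrix ι κ ℝ} : frobSq X = 0 ↔ X = 0 := by
  rw [frobSq_eq_trace, ← conjTranspose_eq_transpose_of_trivial,
    trace_conjTranspose_mul_self_eq_zero_iff]

lemma frobSq_add_of_transpose_mul_eq_zero {X Y : Matrix ι κ ℝ} (hXY : Xᵀ * Y = 0) :
    frobSq (X + Y) = frobSq X + frobSq Y := by
  have hYX : Yᵀ * X = 0 := by simpa using congrArg transpose hXY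
  simp only [frobSq_eq_trace, transpose_add, Matrix.add_mul, Matrix.mul_add, hXY, hYX, add_zero,
    zero_add, trace_add]

lemma inner_toEuclideanLin_of_transpose_mul_eq_zero [DecidableEq κ] {X Y : Matrix ι κ ℝ}
    (hXY : Xᵀ * Y = 0) (v w : EuclideanSpace ℝ κ) :
    inner ℝ (toEuclideanLin X v) (toEuclideanLin Y w) = 0 := by
  classical
  rw [← LinearMap.adjoint_inner_right, ← toEuclideanLin_conjTranspose_eq_adjoint,
    conjTranspose_eq_transpose_of_trivial]
  simp [toLpLin_apply, hXY]

lemma opNorm_le_opNorm_add_of_transpose_mul_eq_zero [DecidableEq κ] {X Y : Matrix ι κ ℝ}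
    (hXY : Xᵀ * Y = 0) : opNorm X ≤ opNorm (X + Y) := by
  refine ContinuousLinearMap.opNorm_le_bound _ (norm_nonneg _) fun v => ?_
  have pythagoras : ‖toEuclideanLin (X + Y) v‖ * ‖toEuclideanLin (X + Y) v‖ =
      ‖toEuclideanLin X v‖ * ‖toEuclideanLin X v‖ +
        ‖toEuclideanLin Y v‖ * ‖toEuclideanLin Y v‖ := by
    rw [map_add, LinearMap.add_apply]
    exact norm_add_sq_eq_norm_sq_add_norm_sq_real
      (inner_toEuclideanLin_of_transpose_mul_eq_zero hXY v v)
  calc ‖toEuclideanLin X v‖ ≤ ‖toEuclideanLin (X + Y) v‖ :=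
        nonneg_le_nonneg_of_sq_le_sq (norm_nonneg _)
          (pythagoras ▸ le_add_of_nonneg_right (mul_self_nonneg _))
    _ ≤ opNorm (X + Y) * ‖v‖ :=
        (toEuclideanLin (X + Y)).toContinuousLinearMap.le_opNorm v

end Orthogonality

section LeastSquares

variable {ι κ ν : Type*} [Fintype κ]

lemma residual_eq_add {S : Type*} [Ring S] (B : Matrix ι κ S) (C : Matrix ι ν S)
    (R X : Matrix κ ν S) : B * X - C = (B * R - C) + B * (X - R) := by
  rw [Matrix.mul_sub]
  abel

variable [Fintype ι]

lemma transpose_residual_mul_eq_zero_of_normal_equation {S ν' : Type*} [CommRing S]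
    {B : Matrix ι κ S} {C : Matrix ι ν S} {R : Matrix κ ν S} (hR : Bᵀ * (B * R - C) = 0)
    (D : Matrix κ ν' S) :
    (B * R - C)ᵀ * (B * D) = 0 := by
  have hR' : (B * R - C)ᵀ * B = 0 := by simpa using congrArg transpose hR
  rw [← Matrix.mul_assoc, hR', Matrix.zero_mul]

variable [Fintype ν] {B : Matrix ι κ ℝ} {C : Matrix ι ν ℝ} {R : Matrix κ ν ℝ}

lemma frobSq_residual_eq_add_of_normal_equation (hR : Bᵀ * (B * R - C) = 0) (X : Matrix κ ν ℝ) :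
    frobSq (B * X - C) = frobSq (B * R - C) + frobSq (B * (X - R)) := by
  rw [residual_eq_add B C R X,
    frobSq_add_of_transpose_mul_eq_zero (transpose_residual_mul_eq_zero_of_normal_equation hR _)]

lemma frobSq_residual_le_of_normal_equation (hR : Bᵀ * (B * R - C) = 0) (X : Matrix κ ν ℝ) :
    frobSq (B * R - C) ≤ frobSq (B * X - C) := by
  rw [frobSq_residual_eq_add_of_normal_equation hR X]
  exact le_add_of_nonneg_right (frobSq_nonneg _)

lemma eq_of_frobSq_residual_eq [DecidableEq κ] (hB : IsUnit (Bᵀ * B))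
    (hR : Bᵀ * (B * R - C) = 0) {X : Matrix κ ν ℝ}
    (hX : frobSq (B * X - C) = frobSq (B * R - C)) : X = R := by
  have hBXR : B * (X - R) = 0 := by
    rwa [frobSq_residual_eq_add_of_normal_equation hR X, add_eq_left, frobSq_eq_zero_iff] at hX
  have hdet : IsUnit (Bᵀ * B).det := (isUnit_iff_isUnit_det _).1 hB
  rw [← sub_eq_zero, ← nonsing_inv_mul_cancel_left (Bᵀ * B) (X - R) hdet, Matrix.mul_assoc Bᵀ,
    hBXR, Matrix.mul_zero, Matrix.mul_zero]

lemma opNorm_residual_le_of_normal_equation [DecidableEq ν] (hR : Bᵀ * (B * R - C) = 0)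
    (X : Matrix κ ν ℝ) :
    opNorm (B * R - C) ≤ opNorm (B * X - C) := by
  rw [residual_eq_add B C R X]
  exact opNorm_le_opNorm_add_of_transpose_mul_eq_zero
    (transpose_residual_mul_eq_zero_of_normal_equation hR _)

end LeastSquares

section Augmented

variable {ι κ ν S : Type*}

/-- The design matrix `vcat(K, μI)` of the least-squares problem equivalent to ridge
regression. -/
def ridgeDesign [DecidableEq κ] [MulZeroOneClass S] (K : Matrix ι κ S) (μ : S) :
    Matrix (ι ⊕ κ) κ S :=
  fromRows K (μ • 1)

/-- The target `vcat(A, 0)` of the least-squares problem equivalent to ridge regression; the zero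
block has one row for each column of the design matrix. -/
def ridgeTarget [Zero S] (κ : Type*) (A : Matrix ι ν S) : Matrix (ι ⊕ κ) ν S :=
  fromRows A 0

variable [Fintype κ] [DecidableEq κ]

lemma ridgeDesign_mul_sub_ridgeTarget [Ring S] (K : Matrix ι κ S) (μ : S) (A : Matrix ι ν S)
    (X : Matrix κ ν S) :
    ridgeDesign K μ * X - ridgeTarget κ A = fromRows (K * X - A) (μ • X) := by
  rw [ridgeDesign, ridgeTarget, fromRows_mul, Matrix.smul_mul, Matrix.one_mul]
  ext (i | i) j <;> simp

variable [Fintype ι] [CommRing S]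

lemma transpose_ridgeDesign_mul_self (K : Matrix ι κ S) (μ : S) :
    (ridgeDesign K μ)ᵀ * ridgeDesign K μ = Kᵀ * K + μ ^ 2 • (1 : Matrix κ κ S) := by
  simp [ridgeDesign, transpose_fromRows, fromCols_mul_fromRows, smul_smul, sq]

lemma transpose_ridgeDesign_mul_ridgeTarget (K : Matrix ι κ S) (μ : S) (A : Matrix ι ν S) :
    (ridgeDesign K μ)ᵀ * ridgeTarget κ A = Kᵀ * A := by
  simp [ridgeDesign, ridgeTarget, transpose_fromRows, fromCols_mul_fromRows]

lemma isUnit_transpose_ridgeDesign_mul_self (K : Matrix ι κ ℝ) {μ : ℝ} (hμ : μ ≠ 0) :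
    IsUnit ((ridgeDesign K μ)ᵀ * ridgeDesign K μ) := by
  rw [transpose_ridgeDesign_mul_self, ← conjTranspose_eq_transpose_of_trivial]
  exact (PosDef.posSemidef_add (posSemidef_conjTranspose_mul_self K)
    (PosDef.one.smul (by positivity))).isUnit

lemma frobSq_ridgeDesign_mul_transpose_sub_ridgeTarget [Fintype ν] (K : Matrix ι κ ℝ) (μ : ℝ)
    (A : Matrix ι ν ℝ) (φ : Matrix ν κ ℝ) :
    frobSq (ridgeDesign K μ * φᵀ - ridgeTarget κ A) =
      frobSq (K * φᵀ - A) + μ ^ 2 * frobSq φ := by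
  rw [ridgeDesign_mul_sub_ridgeTarget, frobSq_fromRows, frobSq_smul, frobSq_transpose]

end Augmented

section Ridge

variable {Nt L m : ℕ}

lemma ridge_add (K : Matrix (Fin Nt) (Fin L) ℝ) (μ : ℝ) (A₁ A₂ : Matrix (Fin Nt) (Fin m) ℝ) :
    ridge K μ (A₁ + A₂) = ridge K μ A₁ + ridge K μ A₂ := by
  simp only [ridge, Matrix.mul_add, transpose_add]

lemma ridge_smul (K : Matrix (Fin Nt) (Fin L) ℝ) (μ c : ℝ) (A : Matrix (Fin Nt) (Fin m) ℝ) :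
    ridge K μ (c • A) = c • ridge K μ A := by
  simp only [ridge, Matrix.mul_smul, transpose_smul]

lemma ridge_normal_equation (K : Matrix (Fin Nt) (Fin L) ℝ) {μ : ℝ} (hμ : μ ≠ 0)
    (A : Matrix (Fin Nt) (Fin m) ℝ) :
    (ridgeDesign K μ)ᵀ * (ridgeDesign K μ * (ridge K μ A)ᵀ - ridgeTarget (Fin L) A) = 0 := by
  have hdet := (isUnit_iff_isUnit_det _).1 (isUnit_transpose_ridgeDesign_mul_self K hμ)
  rw [transpose_ridgeDesign_mul_self] at hdet
  rw [Matrix.mul_sub, ← Matrix.mul_assoc, transpose_ridgeDesign_mul_self,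
    transpose_ridgeDesign_mul_ridgeTarget, ridge, transpose_transpose, Matrix.mul_assoc _ Kᵀ A,
    mul_nonsing_inv_cancel_left _ _ hdet, sub_self]

end Ridge

theorem stmt8 {Nt L m : ℕ} (hNt : 1 ≤ Nt) (hL : 1 ≤ L) (hm : 1 ≤ m)
    (K : Matrix (Fin Nt) (Fin L) ℝ) (μ : ℝ) (hμ : 0 < μ) (A : Matrix (Fin Nt) (Fin m) ℝ) :
    -- (a) `ridge K μ A` is the unique minimizer of the Frobenius objective ...
    (∀ φ : Matrix (Fin m) (Fin L) ℝ,
        frobSq (K * (ridge K μ A)ᵀ - A) + μ ^ 2 * frobSq (ridge K μ A) ≤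
          frobSq (K * φᵀ - A) + μ ^ 2 * frobSq φ) ∧
    (∀ φ : Matrix (Fin m) (Fin L) ℝ,
        frobSq (K * φᵀ - A) + μ ^ 2 * frobSq φ =
          frobSq (K * (ridge K μ A)ᵀ - A) + μ ^ 2 * frobSq (ridge K μ A) →
        φ = ridge K μ A) ∧
    -- ... and in particular `A ↦ ridge(A, μ)` is linear in `A` ...
    (∀ A₁ A₂ : Matrix (Fin Nt) (Fin m) ℝ, ridge K μ (A₁ + A₂) = ridge K μ A₁ + ridge K μ A₂) ∧
    (∀ (c : ℝ) (A' : Matrix (Fin Nt) (Fin m) ℝ), ridge K μ (c • A') = c • ridge K μ A') ∧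
    -- (b) `ridge K μ A` minimizes the operator norm of the vertical concatenation
    (∀ φ : Matrix (Fin m) (Fin L) ℝ,
        opNorm (Matrix.fromRows (K * (ridge K μ A)ᵀ - A) (μ • (ridge K μ A)ᵀ)) ≤
          opNorm (Matrix.fromRows (K * φᵀ - A) (μ • φᵀ))) := by
  have hR := ridge_normal_equation K hμ.ne' A
  simp only [← frobSq_ridgeDesign_mul_transpose_sub_ridgeTarget, ← ridgeDesign_mul_sub_ridgeTarget]
  refine ⟨fun φ => frobSq_residual_le_of_normal_equation hR φᵀ, fun φ hφ => ?_, ridge_add K μ,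
    ridge_smul K μ, fun φ => opNorm_residual_le_of_normal_equation hR φᵀ⟩
  exact transpose_injective
    (eq_of_frobSq_residual_eq (isUnit_transpose_ridgeDesign_mul_self K hμ.ne') hR hφ)
end

section
/- Let Ñ, L̄, m ≥ 1, let K ∈ ℝ^{Ñ×L̄}, let Δ ∈ ℝ^{Ñ×m}, let μ > 0, and let φ_r ∈ ℝ^{m×L̄} be defined by φ_rᵀ := (KᵀK + μ²I_{L̄})^{−1}·Kᵀ·Δ. Then max{ ‖Δ − Kφ_rᵀ‖_op , μ·‖φ_r‖_op } ≤ Opt_μ, where Opt_μ := min over φ ∈ ℝ^{m×L̄} of ( ‖Δ − Kφᵀ‖_op + μ·‖φ‖_op ). -/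
open Matrix

/-!
The ridge estimator is optimal one input vector at a time: for each `v`, the vector `p = φ_rᵀ v`
minimizes `q ↦ ‖Δ v - K q‖² + μ² ‖q‖²`, because the normal equation makes this objective equal to
its value at `p` plus `‖K (q - p)‖² + μ² ‖q - p‖²`. Comparing with `q = φᵀ v`, both `‖Δ v - K p‖`
and `μ ‖p‖` are at most `‖Δ v - K q‖ + μ ‖q‖ ≤ (‖Δ - K φᵀ‖ + μ ‖φ‖) ‖v‖`.
-/

section InnerProductSpace

variable {𝕜 E F G : Type*} [RCLike 𝕜]
  [SeminormedAddCommGroup E] [InnerProductSpace 𝕜 E]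
  [SeminormedAddCommGroup F] [InnerProductSpace 𝕜 F]
  [SeminormedAddCommGroup G] [NormedSpace 𝕜 G]

/-- `p` solves the ridge normal equation `K† (d - K p) = μ² p` for the data `d`. The equation is
tested against vectors `e`, so that `K` need not have an adjoint. -/
def IsRidgeSolution (K : E →ₗ[𝕜] F) (μ : ℝ) (d : F) (p : E) : Prop :=
  ∀ e, inner 𝕜 (d - K p) (K e) = (μ : 𝕜) ^ 2 * inner 𝕜 p e

namespace IsRidgeSolution

variable {K : E →ₗ[𝕜] F} {μ : ℝ} {d : F} {p : E}

theorem norm_sq_add_eq (hp : IsRidgeSolution K μ d p) (q : E) :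
    ‖d - K q‖ ^ 2 + μ ^ 2 * ‖q‖ ^ 2 =
      ‖d - K p‖ ^ 2 + μ ^ 2 * ‖p‖ ^ 2 + (‖K (q - p)‖ ^ 2 + μ ^ 2 * ‖q - p‖ ^ 2) := by
  have residual : d - K q = (d - K p) - K (q - p) := by rw [map_sub]; abel
  have residual_sq := norm_sub_sq (𝕜 := 𝕜) (d - K p) (K (q - p))
  have point_sq := norm_add_sq (𝕜 := 𝕜) p (q - p)
  have cross_terms : RCLike.re (inner 𝕜 (d - K p) (K (q - p))) =
      μ ^ 2 * RCLike.re (inner 𝕜 p (q - p)) := by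
    rw [hp, ← RCLike.ofReal_pow, RCLike.re_ofReal_mul]
  rw [← residual, cross_terms] at residual_sq
  rw [add_sub_cancel] at point_sq
  rw [residual_sq, point_sq]
  ring

theorem norm_sq_add_le (hp : IsRidgeSolution K μ d p) (q : E) :
    ‖d - K p‖ ^ 2 + μ ^ 2 * ‖p‖ ^ 2 ≤ ‖d - K q‖ ^ 2 + μ ^ 2 * ‖q‖ ^ 2 := by
  rw [hp.norm_sq_add_eq q]
  exact le_add_of_nonneg_right (by positivity)

theorem max_norm_le (hp : IsRidgeSolution K μ d p) (hμ : 0 ≤ μ) (q : E) :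
    max ‖d - K p‖ (μ * ‖p‖) ≤ ‖d - K q‖ + μ * ‖q‖ := by
  have objective_le : ‖d - K p‖ ^ 2 + (μ * ‖p‖) ^ 2 ≤ (‖d - K q‖ + μ * ‖q‖) ^ 2 :=
    calc ‖d - K p‖ ^ 2 + (μ * ‖p‖) ^ 2
      _ ≤ ‖d - K q‖ ^ 2 + (μ * ‖q‖) ^ 2 := by simpa only [mul_pow] using hp.norm_sq_add_le q
      _ ≤ (‖d - K q‖ + μ * ‖q‖) ^ 2 := pow_add_pow_le (by positivity) (by positivity) two_ne_zero
  exact max_le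
    (le_of_sq_le_sq ((le_add_of_nonneg_right (sq_nonneg _)).trans objective_le) (by positivity))
    (le_of_sq_le_sq ((le_add_of_nonneg_left (sq_nonneg _)).trans objective_le) (by positivity))

end IsRidgeSolution

theorem stmt9_general {K : E →L[𝕜] F} {Δ : G →L[𝕜] F} {P : G →L[𝕜] E} {μ : ℝ} (hμ : 0 ≤ μ)
    (hP : ∀ v, IsRidgeSolution (K : E →ₗ[𝕜] F) μ (Δ v) (P v)) (Q : G →L[𝕜] E) :
    max ‖Δ - K ∘L P‖ (μ * ‖P‖) ≤ ‖Δ - K ∘L Q‖ + μ * ‖Q‖ := by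
  have pointwise (v : G) :
      max ‖Δ v - K (P v)‖ (μ * ‖P v‖) ≤ (‖Δ - K ∘L Q‖ + μ * ‖Q‖) * ‖v‖ :=
    calc max ‖Δ v - K (P v)‖ (μ * ‖P v‖)
      _ ≤ ‖(Δ - K ∘L Q) v‖ + μ * ‖Q v‖ := (hP v).max_norm_le hμ (Q v)
      _ ≤ ‖Δ - K ∘L Q‖ * ‖v‖ + μ * (‖Q‖ * ‖v‖) := by gcongr <;> apply ContinuousLinearMap.le_opNorm
      _ = (‖Δ - K ∘L Q‖ + μ * ‖Q‖) * ‖v‖ := by ring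
  have norm_smul_P : ‖(μ : 𝕜) • P‖ = μ * ‖P‖ := by
    rw [norm_smul, RCLike.norm_of_nonneg hμ]
  rw [← norm_smul_P]
  refine max_le ?_ ?_ <;> refine ContinuousLinearMap.opNorm_le_bound _ (by positivity) fun v ↦ ?_
  · exact (le_max_left _ _).trans (pointwise v)
  · rw [_root_.smul_apply, norm_smul, RCLike.norm_of_nonneg hμ]
    exact (le_max_right _ _).trans (pointwise v)

end InnerProductSpace

section Matrix

variable {α β γ : Type*} [Fintype α]

/-- The map `x ↦ A x` between Euclidean spaces, so that `opNorm A = ‖euclideanCLM A‖` holds by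
definition. It is the rectangular counterpart of `Matrix.toEuclideanCLM`. -/
noncomputable def euclideanCLM [Fintype β] [DecidableEq β] (A : Matrix α β ℝ) :
    EuclideanSpace ℝ β →L[ℝ] EuclideanSpace ℝ α :=
  LinearMap.toContinuousLinearMap (toEuclideanLin A)

theorem opNorm_sub_mul [Fintype β] [DecidableEq β] [Fintype γ] [DecidableEq γ]
    (D : Matrix α γ ℝ) (A : Matrix α β ℝ) (B : Matrix β γ ℝ) :
    opNorm (D - A * B) = ‖euclideanCLM D - euclideanCLM A ∘L euclideanCLM B‖ := by
  have map_eq : euclideanCLM (D - A * B) =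
      euclideanCLM D - euclideanCLM A ∘L euclideanCLM B := by
    ext1 v
    simp [euclideanCLM]
  rw [← map_eq]
  rfl

open scoped Matrix.Norms.L2Operator in
theorem opNorm_eq_norm_euclideanCLM_transpose [DecidableEq α] [Fintype β] [DecidableEq β]
    (A : Matrix α β ℝ) : opNorm A = ‖euclideanCLM Aᵀ‖ := by
  rw [← conjTranspose_eq_transpose_of_trivial]
  exact (l2_opNorm_conjTranspose A).symm

theorem inner_euclideanCLM_right [DecidableEq α] [Fintype β] [DecidableEq β]
    (A : Matrix α β ℝ) (x : EuclideanSpace ℝ α) (y : EuclideanSpace ℝ β) :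
    inner ℝ x (euclideanCLM A y) = inner ℝ (euclideanCLM Aᵀ x) y := by
  rw [← conjTranspose_eq_transpose_of_trivial]
  simp only [euclideanCLM, LinearMap.coe_toContinuousLinearMap',
    toEuclideanLin_conjTranspose_eq_adjoint, LinearMap.adjoint_inner_left]

theorem posDef_transpose_mul_self_add_smul_one [Finite β] [DecidableEq β]
    (K : Matrix α β ℝ) {c : ℝ} (hc : 0 < c) : (Kᵀ * K + c • (1 : Matrix β β ℝ)).PosDef := by
  rw [← conjTranspose_eq_transpose_of_trivial]
  exact PosDef.posSemidef_add (posSemidef_conjTranspose_mul_self K) (PosDef.one.smul hc)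

theorem transpose_mul_sub_mul_ridge [Fintype β] [DecidableEq β]
    (K : Matrix α β ℝ) (Δ : Matrix α γ ℝ) {c : ℝ} (hc : 0 < c) {P : Matrix β γ ℝ}
    (hP : P = (Kᵀ * K + c • (1 : Matrix β β ℝ))⁻¹ * Kᵀ * Δ) :
    Kᵀ * (Δ - K * P) = c • P := by
  have isUnit_det : IsUnit (Kᵀ * K + c • (1 : Matrix β β ℝ)).det :=
    (isUnit_iff_isUnit_det _).1 (posDef_transpose_mul_self_add_smul_one K hc).isUnit
  have normal_eq : (Kᵀ * K + c • (1 : Matrix β β ℝ)) * P = Kᵀ * Δ := by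
    rw [hP, Matrix.mul_assoc, mul_nonsing_inv_cancel_left _ _ isUnit_det]
  rw [Matrix.mul_sub, ← normal_eq, Matrix.add_mul, Matrix.mul_assoc, add_sub_cancel_left,
    Matrix.smul_mul, Matrix.one_mul]

theorem isRidgeSolution_euclideanCLM [Fintype β] [DecidableEq β] [Fintype γ] [DecidableEq γ]
    (K : Matrix α β ℝ) (Δ : Matrix α γ ℝ) {μ : ℝ} (hμ : μ ≠ 0) {P : Matrix β γ ℝ}
    (hP : P = (Kᵀ * K + μ ^ 2 • (1 : Matrix β β ℝ))⁻¹ * Kᵀ * Δ) (v : EuclideanSpace ℝ γ) :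
    IsRidgeSolution (euclideanCLM K : EuclideanSpace ℝ β →ₗ[ℝ] EuclideanSpace ℝ α) μ
      (euclideanCLM Δ v) (euclideanCLM P v) := by
  classical
  intro e
  have normal_eq : euclideanCLM Kᵀ (euclideanCLM Δ v - euclideanCLM K (euclideanCLM P v)) =
      μ ^ 2 • euclideanCLM P v := by
    simpa [euclideanCLM] using
      congrArg (fun A ↦ euclideanCLM A v) (transpose_mul_sub_mul_ridge K Δ (by positivity) hP)
  rw [ContinuousLinearMap.coe_coe, inner_euclideanCLM_right, normal_eq, real_inner_smul_left]
  rfl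

end Matrix

theorem stmt9 {Nt L m : ℕ} (hNt : 1 ≤ Nt) (hL : 1 ≤ L) (hm : 1 ≤ m)
    (K : Matrix (Fin Nt) (Fin L) ℝ) (Δ : Matrix (Fin Nt) (Fin m) ℝ)
    (μ : ℝ) (hμ : 0 < μ) (φr : Matrix (Fin m) (Fin L) ℝ)
    (hφr : φrᵀ = (Kᵀ * K + μ ^ 2 • (1 : Matrix (Fin L) (Fin L) ℝ))⁻¹ * Kᵀ * Δ) :
    max (opNorm (Δ - K * φrᵀ)) (μ * opNorm φr) ≤
      ⨅ φ : Matrix (Fin m) (Fin L) ℝ, (opNorm (Δ - K * φᵀ) + μ * opNorm φ) := by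
  refine le_ciInf fun φ ↦ ?_
  simpa only [opNorm_sub_mul, opNorm_eq_norm_euclideanCLM_transpose φr,
    opNorm_eq_norm_euclideanCLM_transpose φ]
    using stmt9_general hμ.le (isRidgeSolution_euclideanCLM K Δ hμ.ne' hφr) (euclideanCLM φᵀ)
end

section
/- Let n, m ≥ 1 and T, d ≥ 1 be integers, let σ > 0, let A ∈ ℝ^{n×n} and C ∈ ℝ^{m×n}, and let 𝒪 ∈ ℝ^{dm×n} be the stacked matrix with block rows C, C·A^T, C·A^{2T}, …, C·A^{(d−1)T} (where A^T denotes the T-th matrix power of A). Assume: (i) the row space of C is contained in the row space of A (i.e., range(Cᵀ) ⊆ range(Aᵀ) as subspaces of ℝ^n); and (ii) for every x ∈ range(Aᵀ), ‖𝒪·x‖₂ ≥ σ·‖x‖₂. Then there exists a matrix φ ∈ ℝ^{m×dm} such that φ·𝒪 = C·A^{Td} and ‖φ‖_op ≤ ‖C·A^{Td}‖_op / σ. -/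
open Matrix

/-!
The row space `R` of `A` is the orthogonal complement of `ker A`, and `ker A` is annihilated by `C`
(its rows lie in `R`), hence by every `C * A ^ s`. So the observability matrix `O` and the target
`C * A ^ s` are both determined by their restrictions to `R`. There `O` is bounded below by `σ`, so
inverting it on its range, after projecting orthogonally onto that range, gives a left inverse of
norm at most `σ⁻¹`; the filter is this left inverse followed by the target.
-/

open LinearMap (ker range mem_ker toContinuousLinearMap)
open scoped Matrix.Norms.L2Operator

section Operators

variable {𝕜 E F G : Type*} [RCLike 𝕜] [NormedAddCommGroup F] [InnerProductSpace 𝕜 F]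
  [CompleteSpace F] {σ : ℝ}

lemma exists_leftInverse_norm_le_inv_of_bounded_below [NormedAddCommGroup E] [NormedSpace 𝕜 E]
    [CompleteSpace E] (f : E →L[𝕜] F) (hσ : 0 < σ) (hf : ∀ x, σ * ‖x‖ ≤ ‖f x‖) :
    ∃ l : F →L[𝕜] E, l ∘L f = .id 𝕜 E ∧ ‖l‖ ≤ σ⁻¹ := by
  have norm_le (x : E) : ‖x‖ ≤ σ⁻¹ * ‖f x‖ := (le_inv_mul_iff₀ hσ).2 (hf x)
  have antilipschitz : AntilipschitzWith ⟨σ⁻¹, by positivity⟩ f :=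
    f.antilipschitz_of_bound norm_le
  have isClosed_range : IsClosed (Set.range f) :=
    antilipschitz.isClosed_range f.uniformContinuous
  have : CompleteSpace f.range := isClosed_range.completeSpace_coe
  let e : E ≃L[𝕜] f.range := f.equivRange antilipschitz.injective isClosed_range
  let P : F →L[𝕜] f.range := f.range.orthogonalProjectionOnto
  refine ⟨e.symm ∘L P, ?_, ?_⟩
  · ext x
    have hP : P (f x) = e x := f.range.orthogonalProjectionOnto_mem_subspace_eq_self (e x)
    simp [hP]
  · refine ContinuousLinearMap.opNorm_le_bound _ (by positivity) fun y ↦ ?_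
    have hf_symm : f (e.symm (P y)) = P y := congrArg Subtype.val (e.apply_symm_apply (P y))
    calc ‖e.symm (P y)‖ ≤ σ⁻¹ * ‖f (e.symm (P y))‖ := norm_le _
      _ = σ⁻¹ * ‖P y‖ := by rw [hf_symm, Submodule.coe_norm]
      _ ≤ σ⁻¹ * ‖y‖ := by
        gcongr
        exact f.range.norm_orthogonalProjectionOnto_apply_le y

variable [NormedAddCommGroup E] [InnerProductSpace 𝕜 E] [NormedAddCommGroup G] [NormedSpace 𝕜 G]

lemma apply_orthogonalProjectionOnto_of_orthogonal_le_ker (f : E →L[𝕜] G) {R : Submodule 𝕜 E}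
    [R.HasOrthogonalProjection] (hf : Rᗮ ≤ f.ker) (x : E) :
    f (R.orthogonalProjectionOnto x) = f x := by
  have hx : f (x - R.starProjection x) = 0 := hf (R.sub_starProjection_mem_orthogonal x)
  rw [map_sub, sub_eq_zero] at hx
  exact hx.symm

lemma exists_comp_eq_norm_le_div_of_bounded_below_on (f : E →L[𝕜] F) (g : E →L[𝕜] G)
    {R : Submodule 𝕜 E} [CompleteSpace R] (hσ : 0 < σ) (hfR : ∀ x ∈ R, σ * ‖x‖ ≤ ‖f x‖)
    (hf : Rᗮ ≤ f.ker) (hg : Rᗮ ≤ g.ker) :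
    ∃ h : F →L[𝕜] G, h ∘L f = g ∧ ‖h‖ ≤ ‖g‖ / σ := by
  obtain ⟨l, hl, hl_norm⟩ := exists_leftInverse_norm_le_inv_of_bounded_below (f ∘L R.subtypeL) hσ
    fun x ↦ hfR x x.2
  refine ⟨g ∘L R.subtypeL ∘L l, ?_, ?_⟩
  · ext x
    let r : R := R.orthogonalProjectionOnto x
    calc g (l (f x)) = g (l (f r)) := by
          rw [apply_orthogonalProjectionOnto_of_orthogonal_le_ker f hf]
      _ = g r := congrArg (fun y : R ↦ g y) (DFunLike.congr_fun hl r)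
      _ = g x := apply_orthogonalProjectionOnto_of_orthogonal_le_ker g hg x
  · calc ‖g ∘L R.subtypeL ∘L l‖ ≤ ‖g‖ * (‖R.subtypeL‖ * ‖l‖) :=
          (g.opNorm_comp_le _).trans (by gcongr; exact ContinuousLinearMap.opNorm_comp_le _ _)
      _ ≤ ‖g‖ * (1 * σ⁻¹) := by
        gcongr
        exact R.norm_subtypeL_le
      _ = ‖g‖ / σ := by rw [one_mul, div_eq_mul_inv]

end Operators

section Observability

variable {α ι m n : Type*} [Semiring α] [Fintype n] [DecidableEq n]

/-- The observability matrix of the system `x ↦ A x` with output `C`, sampled at the times `t j`: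
its block row `j` is `C * A ^ t j`. -/
def observabilityMatrix (A : Matrix n n α) (C : Matrix m n α) (t : ι → ℕ) : Matrix (ι × m) n α :=
  of fun ji ↦ (C * A ^ t ji.1) ji.2

lemma mul_pow_mulVec_eq_zero {A : Matrix n n α} {C : Matrix m n α} {z : n → α}
    (hA : A *ᵥ z = 0) (hC : C *ᵥ z = 0) (s : ℕ) : (C * A ^ s) *ᵥ z = 0 := by
  cases s with
  | zero => rwa [pow_zero, Matrix.mul_one]
  | succ s => rw [pow_succ, ← Matrix.mul_assoc, ← mulVec_mulVec, hA, mulVec_zero]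

lemma observabilityMatrix_mulVec_eq_zero {A : Matrix n n α} {C : Matrix m n α} {z : n → α}
    (hA : A *ᵥ z = 0) (hC : C *ᵥ z = 0) (t : ι → ℕ) : observabilityMatrix A C t *ᵥ z = 0 :=
  funext fun ji ↦ congrFun (mul_pow_mulVec_eq_zero hA hC (t ji.1)) ji.2

end Observability

section Matrices

variable {𝕜 ι k m n p : Type*} [RCLike 𝕜] [Fintype m] [Fintype n] {σ : ℝ}

lemma mem_orthogonal_range_conjTranspose_iff [DecidableEq m] (A : Matrix m n 𝕜)
    (z : EuclideanSpace 𝕜 n) : z ∈ (range (toEuclideanLin Aᴴ))ᗮ ↔ A *ᵥ z = 0 := by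
  classical
  rw [LinearMap.orthogonal_range, ← toEuclideanLin_conjTranspose_eq_adjoint,
    conjTranspose_conjTranspose, mem_ker, toLpLin_apply, WithLp.toLp_eq_zero]

lemma mulVec_eq_zero_of_range_conjTranspose_le [Fintype p] {A : Matrix m n 𝕜} {C : Matrix p n 𝕜}
    (hCA : range Cᴴ.mulVecLin ≤ range Aᴴ.mulVecLin) {z : n → 𝕜} (hz : A *ᵥ z = 0) :
    C *ᵥ z = 0 := by
  classical
  have hCA' : range (toEuclideanLin Cᴴ) ≤ range (toEuclideanLin Aᴴ) := by
    rintro _ ⟨x, rfl⟩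
    obtain ⟨w, hw⟩ := hCA ⟨x, rfl⟩
    exact ⟨WithLp.toLp 2 w, congrArg (WithLp.toLp 2) hw⟩
  apply (mem_orthogonal_range_conjTranspose_iff C (WithLp.toLp 2 z)).1
  exact Submodule.orthogonal_le hCA'
    ((mem_orthogonal_range_conjTranspose_iff A (WithLp.toLp 2 z)).2 hz)

lemma orthogonal_range_conjTranspose_le_ker [DecidableEq m] [DecidableEq n] {A : Matrix m n 𝕜}
    {B : Matrix p n 𝕜} (hB : ∀ z, A *ᵥ z = 0 → B *ᵥ z = 0) :
    (range (toEuclideanLin Aᴴ))ᗮ ≤ ker (toEuclideanLin B) := fun z hz ↦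
  congrArg (WithLp.toLp 2) (hB z ((mem_orthogonal_range_conjTranspose_iff A z).1 hz))

lemma exists_mul_eq_l2_opNorm_le_div [Fintype k] [Fintype p] [DecidableEq n] [DecidableEq p]
    (A : Matrix k n 𝕜) (O : Matrix p n 𝕜) (M : Matrix m n 𝕜) (hσ : 0 < σ)
    (hobs : ∀ x ∈ range Aᴴ.mulVecLin, σ * ‖WithLp.toLp 2 x‖ ≤ ‖WithLp.toLp 2 (O *ᵥ x)‖)
    (hO : ∀ z, A *ᵥ z = 0 → O *ᵥ z = 0) (hM : ∀ z, A *ᵥ z = 0 → M *ᵥ z = 0) :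
    ∃ φ : Matrix m p 𝕜, φ * O = M ∧ ‖φ‖ ≤ ‖M‖ / σ := by
  classical
  have bounded_below : ∀ x ∈ range (toEuclideanLin Aᴴ), σ * ‖x‖ ≤ ‖toEuclideanLin O x‖ := by
    rintro _ ⟨w, rfl⟩
    exact hobs _ ⟨w, rfl⟩
  obtain ⟨h, hh, hh_norm⟩ := exists_comp_eq_norm_le_div_of_bounded_below_on
    (toContinuousLinearMap (toEuclideanLin O)) (toContinuousLinearMap (toEuclideanLin M)) hσ
    bounded_below (orthogonal_range_conjTranspose_le_ker hO)
    (orthogonal_range_conjTranspose_le_ker hM)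
  refine ⟨toEuclideanLin.symm h, ?_, ?_⟩
  · apply toEuclideanLin.injective
    rw [toLpLin_mul_same, LinearEquiv.apply_symm_apply]
    exact congrArg ContinuousLinearMap.toLinearMap hh
  · rwa [l2_opNorm_def, LinearEquiv.trans_apply, LinearEquiv.apply_symm_apply]

theorem stmt19_general [Fintype ι] [DecidableEq ι] [DecidableEq m] [DecidableEq n]
    (A : Matrix n n 𝕜) (C : Matrix m n 𝕜) (t : ι → ℕ) (s : ℕ) (hσ : 0 < σ)
    (hrow : range Cᴴ.mulVecLin ≤ range Aᴴ.mulVecLin)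
    (hobs : ∀ x ∈ range Aᴴ.mulVecLin,
      σ * ‖WithLp.toLp 2 x‖ ≤ ‖WithLp.toLp 2 (observabilityMatrix A C t *ᵥ x)‖) :
    ∃ φ : Matrix m (ι × m) 𝕜,
      φ * observabilityMatrix A C t = C * A ^ s ∧ ‖φ‖ ≤ ‖C * A ^ s‖ / σ :=
  have hC (z : n → 𝕜) (hz : A *ᵥ z = 0) : C *ᵥ z = 0 :=
    mulVec_eq_zero_of_range_conjTranspose_le hrow hz
  exists_mul_eq_l2_opNorm_le_div A _ _ hσ hobs
    (fun z hz ↦ observabilityMatrix_mulVec_eq_zero hz (hC z hz) t)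
    (fun z hz ↦ mul_pow_mulVec_eq_zero hz (hC z hz) s)

end Matrices

/-- Strong observability: existence of a filter reconstructing `C·A^{Td}` from the
`T`-subsampled `d`-step observability matrix, with operator norm at most `‖C·A^{Td}‖/σ`. -/
theorem stmt19 {n m : ℕ} (T d : ℕ) (hn : 1 ≤ n) (hm : 1 ≤ m) (hT : 1 ≤ T) (hd : 1 ≤ d)
    (σ : ℝ) (hσ : 0 < σ)
    (A : Matrix (Fin n) (Fin n) ℝ) (C : Matrix (Fin m) (Fin n) ℝ)
    (O : Matrix (Fin d × Fin m) (Fin n) ℝ)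
    (hO : ∀ (j : Fin d) (i : Fin m) (l : Fin n), O (j, i) l = (C * A ^ ((j : ℕ) * T)) i l)
    -- (i) row space of `C` is contained in the row space of `A`
    (hrow : ∀ y : Fin n → ℝ, (∃ x, Cᵀ.mulVec x = y) → ∃ w, Aᵀ.mulVec w = y)
    -- (ii) `𝒪` is bounded below by `σ` on the row space of `A`
    (hobs : ∀ x : Fin n → ℝ, (∃ w, Aᵀ.mulVec w = x) →
      σ * Real.sqrt (∑ l, x l ^ 2) ≤ Real.sqrt (∑ ji, (O.mulVec x ji) ^ 2)) :
    ∃ φ : Matrix (Fin m) (Fin d × Fin m) ℝ,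
      φ * O = C * A ^ (T * d) ∧ opNorm φ ≤ opNorm (C * A ^ (T * d)) / σ := by
  obtain rfl : O = observabilityMatrix A C (fun j : Fin d ↦ j * T) :=
    Matrix.ext fun ji l ↦ hO ji.1 ji.2 l
  -- Over `ℝ`, `ᴴ` is `ᵀ` and the L2 operator norm is `opNorm`, both by unfolding.
  exact stmt19_general A C _ (T * d) hσ hrow
    fun x hx ↦ by simpa [EuclideanSpace.norm_eq] using hobs x hx
end
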